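/- arXiv:2104.02161 — 2 statements merged into one kernel-verified Lean document; each statement's English description precedes it below -/
import Mathlib

section
/- (Rate of convergence in the feasible case r* = 0.) Let A, B ⊆ ℝⁿ be nonempty closed sets and (A*, B*, 0) a saturated gap between A and B with A*, B* nonempty and compact (so A* = B* ⊆ A ∩ B). Let θ ∈ [1/2, 1), ω = 4θ − 2, γ > 0, 0 < c < γ/2, and assume the gap satisfies the angle condition with exponent ω and constant γ and is (ω/2)-Hölder regular with constant c. Then there exists δ > 0 such that for every alternating sequence (a_k, b_k) between A and B reaching the δ-neighborhood of the gap, both (a_k) and (b_k) converge to a common point b* ∈ A ∩ B, with ‖b_k − b*‖ = O(k^{−(1−θ)/(2θ−1)}) and ‖a_k − b*‖ = O(k^{−(1−θ)/(2θ−1)}) when θ ∈ (1/2, 1), and with R-linear convergence when θ = 1/2. -/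
open Set Metric Filter Topology
open scoped RealInnerProductSpace

noncomputable section

/-- The (possibly multivalued) metric projection onto a set `S`. -/
def projSet {E : Type*} [NormedAddCommGroup E] (S : Set E) (x : E) : Set E :=
  {s | s ∈ S ∧ ‖x - s‖ = Metric.infDist x S}

/-- The proximal normal cone `N_A^p(a) = {λ u : λ ≥ 0, a ∈ P_A(a+u)}`. -/
def proxNormalCone {E : Type*} [NormedAddCommGroup E] [Module ℝ E] (A : Set E) (a : E) :
    Set E :=
  {v | ∃ lam : ℝ, 0 ≤ lam ∧ ∃ u : E, a ∈ projSet A (a + u) ∧ v = lam • u}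

/-- The cosine of the angle between two vectors. -/
def cosAngle {n : ℕ} (u v : EuclideanSpace ℝ (Fin n)) : ℝ := ⟪u, v⟫ / (‖u‖ * ‖v‖)

/-- A gap `(A*, B*, r*)` between `A` and `B`. -/
def IsGap {n : ℕ} (A B Astar Bstar : Set (EuclideanSpace ℝ (Fin n))) (rstar : ℝ) : Prop :=
  Astar ⊆ A ∧ Bstar ⊆ B ∧ 0 ≤ rstar ∧
  (∀ astar ∈ Astar, ∃ bstar ∈ Bstar, bstar ∈ projSet B astar ∧ ‖astar - bstar‖ = rstar) ∧
  (∀ bstar ∈ Bstar, ∃ astar ∈ Astar, astar ∈ projSet A bstar ∧ ‖astar - bstar‖ = rstar)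

/-- The angle condition with constant `γ` and exponent `ω` for the gap `(A*, B*, r*)`:
every prox-building block `b →p a⁺ → b⁺` with `a⁺` near `A*`, `b⁺` near `B*` and
`r = ‖a⁺ - b⁺‖ > r*` satisfies `(1 - cos α)/(r - r*)^ω ≥ γ`, `α = ∠(b - a⁺, b⁺ - a⁺)`. -/
def AngleCond {n : ℕ} (A B Astar Bstar : Set (EuclideanSpace ℝ (Fin n)))
    (rstar γ ω : ℝ) : Prop :=
  ∃ U V : Set (EuclideanSpace ℝ (Fin n)), IsOpen U ∧ Bstar ⊆ U ∧ IsOpen V ∧ Astar ⊆ V ∧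
    ∀ b ∈ B, ∀ aplus ∈ A, b - aplus ∈ proxNormalCone A aplus →
      ∀ bplus ∈ projSet B aplus, aplus ∈ V → bplus ∈ U → rstar < ‖aplus - bplus‖ →
      γ ≤ (1 - cosAngle (b - aplus) (bplus - aplus)) / (‖aplus - bplus‖ - rstar) ^ ω

/-- The gap `(A*, B*, r*)` is `σ`-Hölder regular with constant `c`. -/
def HolderRegularGap {n : ℕ} (A B Astar : Set (EuclideanSpace ℝ (Fin n)))
    (rstar c σ : ℝ) : Prop :=
  ∃ V : Set (EuclideanSpace ℝ (Fin n)), IsOpen V ∧ Astar ⊆ V ∧ ∃ η > (0:ℝ),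
    ∀ b ∈ B, ∀ aplus ∈ projSet A b, ∀ bplus ∈ projSet B aplus,
      aplus ∈ V → rstar < ‖aplus - bplus‖ → ‖aplus - bplus‖ < rstar + η →
      ¬ ∃ b' ∈ B, ‖b' - aplus‖ ≤ (1 + c) * ‖aplus - bplus‖ ∧ aplus ∈ projSet A b' ∧
        Real.sqrt c * (‖aplus - bplus‖ - rstar) ^ σ < cosAngle (b' - bplus) (aplus - bplus)

/-- The gap is saturated: for every neighborhood `V` of `A*` there is a neighborhood `U` of
`B*` with `P_A(b) ⊆ V` for all `b ∈ B ∩ U`. -/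
def SaturatedGap {n : ℕ} (A B Astar Bstar : Set (EuclideanSpace ℝ (Fin n))) : Prop :=
  ∀ V : Set (EuclideanSpace ℝ (Fin n)), IsOpen V → Astar ⊆ V →
    ∃ U : Set (EuclideanSpace ℝ (Fin n)), IsOpen U ∧ Bstar ⊆ U ∧
      ∀ b ∈ B ∩ U, projSet A b ⊆ V

/-- An alternating sequence of projections between `A` and `B`. -/
def IsAltSeq {n : ℕ} (A B : Set (EuclideanSpace ℝ (Fin n)))
    (a b : ℕ → EuclideanSpace ℝ (Fin n)) : Prop :=
  (∀ k, a k ∈ A) ∧ (∀ k, b k ∈ projSet B (a k)) ∧ (∀ k, a (k+1) ∈ projSet A (b k))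

/-- The alternating sequence reaches the `δ`-neighborhood of the gap `(A*, B*, r*)`. -/
def ReachesGap {n : ℕ} (Astar Bstar : Set (EuclideanSpace ℝ (Fin n))) (rstar δ : ℝ)
    (a b : ℕ → EuclideanSpace ℝ (Fin n)) : Prop :=
  ∃ k : ℕ, infDist (b k) Bstar ≤ δ ∧ infDist (a (k+1)) Astar ≤ δ ∧
    rstar < ‖a k - b k‖ ∧ ‖a k - b k‖ < rstar + δ

/-!
Put `t k = ‖a k - b k‖ ^ 2` and `d k = ‖b k - b (k + 1)‖`. Near the gap, the angle condition forces
`d k ≥ μ * t (k + 1) ^ θ`, and together with Hölder regularity and the law of cosines it gives the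
sufficient decrease `t (k + 1) + κ * d k ^ 2 ≤ t k`. As in the Kurdyka-Łojasiewicz theory, these two
inequalities make the potential `d k + C * t (k + 1) ^ (1 - θ)` drop by at least `d (k + 1)` at each
step, so the remaining length of the path is `O(t k ^ (1 - θ))`: a sequence that comes close enough
to the gap never leaves the neighborhood where the inequalities hold, and it converges at the rate
at which `t k ^ (1 - θ)` tends to zero. That rate is read off the recursion
`t (k + 1) + κ * μ ^ 2 * t (k + 1) ^ (2 * θ) ≤ t k`.
-/

section RealInequalities

-- This is the weighted AM-GM inequality `s ^ θ * t ^ (1 - θ) ≤ θ * s + (1 - θ) * t`.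
lemma one_sub_mul_sub_le_rpow_mul_rpow_sub_rpow {θ s t : ℝ} (hθ₀ : 0 ≤ θ) (hθ₁ : θ ≤ 1)
    (hs : 0 ≤ s) (ht : 0 ≤ t) :
    (1 - θ) * (s - t) ≤ s ^ θ * (s ^ (1 - θ) - t ^ (1 - θ)) := by
  have amgm := Real.geom_mean_le_arith_mean2_weighted hθ₀ (sub_nonneg.2 hθ₁) hs ht
    (add_sub_cancel θ 1)
  have hself : s ^ θ * s ^ (1 - θ) = s := by
    rw [← Real.rpow_add_of_nonneg hs hθ₀ (sub_nonneg.2 hθ₁), add_sub_cancel, Real.rpow_one]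
  rw [mul_sub (s ^ θ), hself]
  linarith

lemma le_sq_rpow_one_sub {θ r : ℝ} (hθ₀ : 1 / 2 ≤ θ) (hθ₁ : θ ≤ 1) (hr₀ : 0 ≤ r) (hr₁ : r ≤ 1) :
    r ≤ (r ^ 2) ^ (1 - θ) :=
  calc r = (r ^ 2) ^ (1 / 2 : ℝ) := by rw [← Real.sqrt_eq_rpow, Real.sqrt_sq hr₀]
    _ ≤ (r ^ 2) ^ (1 - θ) :=
      Real.rpow_le_rpow_of_exponent_ge' (sq_nonneg r) (pow_le_one₀ hr₀ hr₁) (by linarith)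
        (by linarith)

lemma sq_rpow_eq_mul_rpow {θ r : ℝ} (hθ : θ ≠ 0) (hr : 0 ≤ r) :
    (r ^ 2) ^ θ = r * r ^ (2 * θ - 1) := by
  rw [← Real.rpow_natCast_mul hr, Nat.cast_ofNat,
    Real.rpow_of_add_eq hr (mul_ne_zero two_ne_zero hθ) (add_sub_cancel 1 (2 * θ)), Real.rpow_one]

lemma sqrt_mul_sqrt_two_mul_eq {γ c : ℝ} (hγ : 0 < γ) (hc : 0 ≤ c) :
    √(2 * c / γ) * √(2 * γ) = 2 * √c := by
  rw [← Real.sqrt_mul (by positivity), show 2 * c / γ * (2 * γ) = 2 ^ 2 * c by field_simp,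
    Real.sqrt_mul (by positivity), Real.sqrt_sq zero_le_two]

lemma one_sub_mul_le_one_add_rpow_neg {β s : ℝ} (hβ : 0 ≤ β) (hs : 0 ≤ s) :
    1 - β * s ≤ (1 + s) ^ (-β) :=
  calc 1 - β * s ≤ Real.exp (s * -β) := by linarith [Real.add_one_le_exp (s * -β)]
    _ = Real.exp s ^ (-β) := Real.exp_mul _ _
    _ ≤ (1 + s) ^ (-β) := by
      have := Real.add_one_le_exp s
      exact Real.rpow_le_rpow_of_nonpos (by positivity) (by linarith) (by linarith)

lemma rpow_neg_sub_add_one_rpow_neg_le {β x : ℝ} (hβ : 0 ≤ β) (hx : 1 ≤ x) :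
    x ^ (-β) - (x + 1) ^ (-β) ≤ β * 2 ^ (β + 1) * (x + 1) ^ (-β - 1) := by
  have hx₀ : 0 < x := by linarith
  have hfactor : (x + 1) ^ (-β) = x ^ (-β) * (1 + x⁻¹) ^ (-β) := by
    rw [← Real.mul_rpow hx₀.le (by positivity), mul_add, mul_one, mul_inv_cancel₀ hx₀.ne']
  have htangent : x ^ (-β) - (x + 1) ^ (-β) ≤ β * x ^ (-β - 1) := by
    have := mul_le_mul_of_nonneg_left
      (one_sub_mul_le_one_add_rpow_neg hβ (inv_nonneg.2 hx₀.le)) (Real.rpow_nonneg hx₀.le (-β))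
    rw [hfactor, Real.rpow_sub_one hx₀.ne', div_eq_mul_inv]
    linarith
  have hdouble : x ^ (-β - 1) ≤ 2 ^ (β + 1) * (x + 1) ^ (-β - 1) :=
    calc x ^ (-β - 1) = 2 ^ (β + 1) * (2 * x) ^ (-β - 1) := by
          rw [Real.mul_rpow zero_le_two hx₀.le, ← mul_assoc, ← Real.rpow_add two_pos]
          simp
      _ ≤ 2 ^ (β + 1) * (x + 1) ^ (-β - 1) :=
        mul_le_mul_of_nonneg_left
          (Real.rpow_le_rpow_of_nonpos (by linarith) (by linarith) (by linarith)) (by positivity)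
  calc x ^ (-β) - (x + 1) ^ (-β) ≤ β * x ^ (-β - 1) := htangent
    _ ≤ β * (2 ^ (β + 1) * (x + 1) ^ (-β - 1)) := by gcongr
    _ = β * 2 ^ (β + 1) * (x + 1) ^ (-β - 1) := (mul_assoc _ _ _).symm

-- For large `C`, the sequence `C * k ^ (-1 / (p - 1))` decreases no faster than the recursion
-- `t (k + 1) + μ * t (k + 1) ^ p ≤ t k` allows, hence majorizes its solutions.
lemma mul_rpow_neg_le_add_mul_rpow {C μ p x : ℝ} (hp : 1 < p) (hx : 1 ≤ x) (hC₀ : 0 < C)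
    (hC : 1 / (p - 1) * 2 ^ (1 / (p - 1) + 1) ≤ μ * C ^ (p - 1)) :
    C * x ^ (-(1 / (p - 1))) ≤
      C * (x + 1) ^ (-(1 / (p - 1))) + μ * (C * (x + 1) ^ (-(1 / (p - 1)))) ^ p := by
  have hp₀ : 0 < p - 1 := sub_pos.2 hp
  have hβ : 0 ≤ 1 / (p - 1) := by positivity
  have hexp : -(1 / (p - 1)) * p = -(1 / (p - 1)) - 1 := by field_simp; ring
  set β := 1 / (p - 1)
  have hx₀ : 0 < x + 1 := by linarith
  have hpow : (C * (x + 1) ^ (-β)) ^ p = C * (C ^ (p - 1) * (x + 1) ^ (-β - 1)) := by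
    rw [Real.mul_rpow hC₀.le (by positivity), ← Real.rpow_mul hx₀.le, hexp, ← mul_assoc,
      Real.rpow_sub_one hC₀.ne', mul_div_cancel₀ _ hC₀.ne']
  have hdrop : C * (x ^ (-β) - (x + 1) ^ (-β)) ≤ μ * (C * (x + 1) ^ (-β)) ^ p :=
    calc C * (x ^ (-β) - (x + 1) ^ (-β)) ≤ C * (β * 2 ^ (β + 1) * (x + 1) ^ (-β - 1)) := by
          gcongr
          exact rpow_neg_sub_add_one_rpow_neg_le hβ hx
      _ ≤ C * (μ * C ^ (p - 1) * (x + 1) ^ (-β - 1)) := by gcongr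
      _ = μ * (C * (x + 1) ^ (-β)) ^ p := by rw [hpow]; ring
  linarith

end RealInequalities

section Recursions

variable {t : ℕ → ℝ} {N : ℕ}

lemma isBigO_pow_of_succ_le_mul {q : ℝ} (hq : 0 < q) (ht : ∀ k, 0 ≤ t k)
    (h : ∀ k ≥ N, t (k + 1) ≤ q * t k) : t =O[atTop] fun k => q ^ k := by
  have hbound : ∀ k ≥ N, t k ≤ t N / q ^ N * q ^ k := by
    intro k hk
    induction k, hk using Nat.le_induction with
    | base => rw [div_mul_cancel₀ _ (pow_pos hq N).ne']
    | succ k hk ih =>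
      calc t (k + 1) ≤ q * t k := h k hk
        _ ≤ q * (t N / q ^ N * q ^ k) := by gcongr
        _ = t N / q ^ N * q ^ (k + 1) := by ring
  refine .of_bound (t N / q ^ N) (eventually_atTop.2 ⟨N, fun k hk => ?_⟩)
  rw [Real.norm_of_nonneg (ht k), Real.norm_of_nonneg (by positivity)]
  exact hbound k hk

variable {μ p : ℝ}

lemma tendsto_zero_of_succ_add_mul_rpow_le (hμ : 0 < μ) (hp : 0 ≤ p) (ht : ∀ k, 0 ≤ t k)
    (h : ∀ k ≥ N, t (k + 1) + μ * t (k + 1) ^ p ≤ t k) : Tendsto t atTop (𝓝 0) := by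
  have hanti : Antitone fun k => t (k + N) := antitone_nat_of_succ_le fun k => by
    have hstep := h (k + N) (Nat.le_add_left N k)
    have hnonneg : 0 ≤ μ * t (k + N + 1) ^ p := mul_nonneg hμ.le (Real.rpow_nonneg (ht _) p)
    rw [Nat.add_right_comm]
    linarith
  have hbdd : BddBelow (range fun k => t (k + N)) := ⟨0, by rintro _ ⟨k, rfl⟩; exact ht _⟩
  obtain ⟨L, hL⟩ : ∃ L, Tendsto t atTop (𝓝 L) :=
    ⟨_, (tendsto_add_atTop_iff_nat N).1 (tendsto_atTop_ciInf hanti hbdd)⟩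
  have hL' : Tendsto (fun k => t (k + 1)) atTop (𝓝 L) := (tendsto_add_atTop_iff_nat 1).2 hL
  have hL₀ : 0 ≤ L := ge_of_tendsto' hL ht
  have hlimit : L + μ * L ^ p ≤ L :=
    le_of_tendsto_of_tendsto (hL'.add ((hL'.rpow_const (Or.inr hp)).const_mul μ)) hL
      (eventually_atTop.2 ⟨N, h⟩)
  have hpow : L ^ p = 0 := by
    have : 0 ≤ L ^ p := Real.rpow_nonneg hL₀ p
    nlinarith
  rwa [((Real.rpow_eq_zero_iff_of_nonneg hL₀).1 hpow).1] at hL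

lemma isBigO_rpow_of_succ_add_mul_rpow_le (hμ : 0 < μ) (hp : 1 < p) (ht : ∀ k, 0 ≤ t k)
    (h : ∀ k ≥ N, t (k + 1) + μ * t (k + 1) ^ p ≤ t k) :
    t =O[atTop] fun k => (k : ℝ) ^ (-(1 / (p - 1))) := by
  have hp₀ : 0 < p - 1 := sub_pos.2 hp
  obtain ⟨M, hM₁, hMN⟩ : ∃ M, 1 ≤ M ∧ N ≤ M := ⟨max 1 N, le_max_left _ _, le_max_right _ _⟩
  obtain ⟨C, hC₀, hCM, hC⟩ : ∃ C > 0, t M ≤ C * (M : ℝ) ^ (-(1 / (p - 1))) ∧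
      1 / (p - 1) * 2 ^ (1 / (p - 1) + 1) ≤ μ * C ^ (p - 1) := by
    have hM₀ : (0 : ℝ) < (M : ℝ) ^ (-(1 / (p - 1))) := by positivity
    have hlarge := ((tendsto_rpow_atTop hp₀).const_mul_atTop hμ).eventually_ge_atTop
      (1 / (p - 1) * 2 ^ (1 / (p - 1) + 1))
    obtain ⟨C, hC, hCt, hC₀⟩ := (hlarge.and ((eventually_ge_atTop (t M / _)).and
      (eventually_gt_atTop 0))).exists
    exact ⟨C, hC₀, (div_le_iff₀ hM₀).1 hCt, hC⟩
  have hbound : ∀ k ≥ M, t k ≤ C * (k : ℝ) ^ (-(1 / (p - 1))) := by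
    intro k hk
    induction k, hk using Nat.le_induction with
    | base => exact hCM
    | succ k hk ih =>
      have hsuper := mul_rpow_neg_le_add_mul_rpow (x := k) hp
        (by exact_mod_cast hM₁.trans hk) hC₀ hC
      push_cast
      by_contra! hlt
      have hpow : μ * (C * ((k : ℝ) + 1) ^ (-(1 / (p - 1)))) ^ p ≤ μ * t (k + 1) ^ p := by
        gcongr
      linarith [h k (hMN.trans hk)]
  refine .of_bound C (eventually_atTop.2 ⟨M, fun k hk => ?_⟩)
  rw [Real.norm_of_nonneg (ht k), Real.norm_of_nonneg (by positivity)]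
  exact hbound k hk

end Recursions

/-- One step of length `d` along which an energy decreases from `s` to `t`, with the sufficient
decrease `κ * d ^ 2` and with length at least `μ * t ^ θ` (a Kurdyka-Łojasiewicz inequality of
exponent `θ`). For alternating projections the energy is the squared distance `‖a k - b k‖ ^ 2`
and `d` is the distance between consecutive iterates in `B`. -/
structure KLStep (θ κ μ s t d : ℝ) : Prop where
  le_length : μ * t ^ θ ≤ d
  descent : t + κ * d ^ 2 ≤ s

/-- The constant `K` for which a path of `KLStep`s starting at energy `s ≤ 1` has length at most
`K * s ^ (1 - θ)`. -/
def klLengthConst (θ κ μ : ℝ) : ℝ := 2 / √κ + 1 / ((1 - θ) * κ * μ)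

lemma klLengthConst_nonneg {θ κ μ : ℝ} (hθ : θ ≤ 1) (hκ : 0 ≤ κ) (hμ : 0 ≤ μ) :
    0 ≤ klLengthConst θ κ μ := by
  have : 0 ≤ 1 - θ := sub_nonneg.2 hθ
  unfold klLengthConst
  positivity

namespace KLStep

variable {θ κ μ s t u d e : ℝ}

lemma mono_left {s' : ℝ} (h : KLStep θ κ μ s t d) (hs : s ≤ s') : KLStep θ κ μ s' t d :=
  ⟨h.le_length, h.descent.trans hs⟩

lemma sq_zero (hθ : θ ≠ 0) (hκ : κ ≤ 1) (hd : 0 ≤ d) :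
    KLStep θ κ μ (d ^ 2) 0 d where
  le_length := by rwa [Real.zero_rpow hθ, mul_zero]
  descent := by rw [zero_add]; exact mul_le_of_le_one_left (sq_nonneg d) hκ

lemma energy_le (h : KLStep θ κ μ s t d) (hκ : 0 ≤ κ) : t ≤ s := by
  have : 0 ≤ κ * d ^ 2 := by positivity
  linarith [h.descent]

lemma length_le (h : KLStep θ κ μ s t d) (hκ : 0 < κ) (ht : 0 ≤ t) : d ≤ √s / √κ := by
  rw [← Real.sqrt_div' s hκ.le]
  refine Real.le_sqrt_of_sq_le ((le_div_iff₀ hκ).2 ?_)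
  linarith [h.descent]

lemma add_mul_rpow_le (h : KLStep θ κ μ s t d) (hκ : 0 ≤ κ) (hμ : 0 ≤ μ) (ht : 0 ≤ t) :
    t + κ * μ ^ 2 * t ^ (2 * θ) ≤ s := by
  have hsq : μ ^ 2 * t ^ (2 * θ) ≤ d ^ 2 := by
    rw [mul_comm 2 θ, Real.rpow_mul ht, Real.rpow_two, ← mul_pow]
    have hlength := h.le_length
    gcongr
  calc t + κ * μ ^ 2 * t ^ (2 * θ) = t + κ * (μ ^ 2 * t ^ (2 * θ)) := by ring
    _ ≤ t + κ * d ^ 2 := by gcongr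
    _ ≤ s := h.descent

-- Concavity of `t ↦ t ^ (1 - θ)` turns the energy drop `t - u ≥ κ * e ^ 2` into a drop of order
-- `e ^ 2 / d` of the power; AM-GM then trades `e ^ 2 / d` for `2 * e - d`.
lemma two_mul_length_le (h : KLStep θ κ μ s t d) (h' : KLStep θ κ μ t u e) (hθ₀ : 0 ≤ θ)
    (hθ₁ : θ < 1) (hκ : 0 < κ) (hμ : 0 < μ) (ht : 0 ≤ t) (hu : 0 ≤ u) :
    2 * e ≤ d + 1 / ((1 - θ) * κ * μ) * (t ^ (1 - θ) - u ^ (1 - θ)) := by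
  have hθ : 0 < 1 - θ := sub_pos.2 hθ₁
  have hpow : 0 ≤ t ^ (1 - θ) - u ^ (1 - θ) :=
    sub_nonneg.2 (Real.rpow_le_rpow hu (h'.energy_le hκ.le) hθ.le)
  have hd : 0 ≤ d := (by positivity : 0 ≤ μ * t ^ θ).trans h.le_length
  have hdrop : (1 - θ) * κ * μ * e ^ 2 ≤ d * (t ^ (1 - θ) - u ^ (1 - θ)) :=
    calc (1 - θ) * κ * μ * e ^ 2 = μ * ((1 - θ) * (κ * e ^ 2)) := by ring
      _ ≤ μ * ((1 - θ) * (t - u)) := by gcongr; linarith [h'.descent]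
      _ ≤ μ * (t ^ θ * (t ^ (1 - θ) - u ^ (1 - θ))) :=
        mul_le_mul_of_nonneg_left
          (one_sub_mul_sub_le_rpow_mul_rpow_sub_rpow hθ₀ hθ₁.le ht hu) hμ.le
      _ = μ * t ^ θ * (t ^ (1 - θ) - u ^ (1 - θ)) := (mul_assoc _ _ _).symm
      _ ≤ d * (t ^ (1 - θ) - u ^ (1 - θ)) := mul_le_mul_of_nonneg_right h.le_length hpow
  refine two_mul_le_add_of_sq_le_mul hd (by positivity) ?_
  rw [one_div, mul_left_comm, le_inv_mul_iff₀ (by positivity)]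
  exact hdrop

end KLStep

section EnergyDecay

variable {t d : ℕ → ℝ} {θ κ μ : ℝ} {N : ℕ}

lemma tendsto_energy_zero (hθ : 0 ≤ θ) (hκ : 0 < κ) (hμ : 0 < μ) (ht : ∀ k, 0 ≤ t k)
    (h : ∀ k ≥ N, KLStep θ κ μ (t k) (t (k + 1)) (d k)) : Tendsto t atTop (𝓝 0) :=
  tendsto_zero_of_succ_add_mul_rpow_le (by positivity : 0 < κ * μ ^ 2)
    (by positivity : 0 ≤ 2 * θ) ht fun k hk => (h k hk).add_mul_rpow_le hκ.le hμ.le (ht _)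

lemma isBigO_energy_rpow (hθ₀ : 1 / 2 < θ) (hθ₁ : θ ≤ 1) (hκ : 0 < κ) (hμ : 0 < μ)
    (ht : ∀ k, 0 ≤ t k) (h : ∀ k ≥ N, KLStep θ κ μ (t k) (t (k + 1)) (d k)) :
    (fun k => t k ^ (1 - θ)) =O[atTop] fun k => (k : ℝ) ^ (-((1 - θ) / (2 * θ - 1))) := by
  have henergy : t =O[atTop] fun k => (k : ℝ) ^ (-(1 / (2 * θ - 1))) :=
    isBigO_rpow_of_succ_add_mul_rpow_le (by positivity : 0 < κ * μ ^ 2) (by linarith) ht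
      fun k hk => (h k hk).add_mul_rpow_le hκ.le hμ.le (ht _)
  refine (henergy.rpow (sub_nonneg.2 hθ₁) (.of_forall fun k => by positivity)).congr_right
    fun k => ?_
  rw [← Real.rpow_mul k.cast_nonneg]
  ring_nf

lemma exists_isBigO_energy_rpow_pow {r : ℝ} (hr : 0 < r) (hκ : 0 < κ) (hμ : 0 < μ)
    (ht : ∀ k, 0 ≤ t k) (h : ∀ k ≥ N, KLStep (1 / 2) κ μ (t k) (t (k + 1)) (d k)) :
    ∃ q : ℝ, 0 < q ∧ q < 1 ∧ (fun k => t k ^ r) =O[atTop] fun k => q ^ k := by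
  have hμκ : 0 < κ * μ ^ 2 := by positivity
  have hq₀ : 0 < (1 + κ * μ ^ 2)⁻¹ := by positivity
  have hq₁ : (1 + κ * μ ^ 2)⁻¹ < 1 := inv_lt_one_of_one_lt₀ (by linarith)
  set q := (1 + κ * μ ^ 2)⁻¹ with hq
  have henergy : t =O[atTop] fun k => q ^ k := by
    refine isBigO_pow_of_succ_le_mul (N := N) hq₀ ht fun k hk => ?_
    have hstep := (h k hk).add_mul_rpow_le hκ.le hμ.le (ht _)
    rw [mul_one_div_cancel two_ne_zero, Real.rpow_one] at hstep
    rw [hq, le_inv_mul_iff₀ (by positivity)]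
    linarith
  refine ⟨q ^ r, by positivity, Real.rpow_lt_one hq₀.le hq₁ hr, ?_⟩
  refine (henergy.rpow hr.le (.of_forall fun k => by positivity)).congr_right fun k => ?_
  rw [← Real.rpow_natCast_mul hq₀.le, mul_comm, Real.rpow_mul_natCast hq₀.le]

end EnergyDecay

section KLSequences

variable {X : Type*} [PseudoMetricSpace X] {x : ℕ → X} {t : ℕ → ℝ} {θ κ μ : ℝ} {n N : ℕ}

lemma dist_add_potential_le_potential (hθ₀ : 0 ≤ θ) (hθ₁ : θ < 1) (hκ : 0 < κ) (hμ : 0 < μ)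
    (ht : ∀ k, 0 ≤ t k) (hnN : n ≤ N)
    (h : ∀ k, n ≤ k → k ≤ N → KLStep θ κ μ (t k) (t (k + 1)) (dist (x k) (x (k + 1)))) :
    dist (x (n + 1)) (x (N + 1)) +
        (dist (x N) (x (N + 1)) + 1 / ((1 - θ) * κ * μ) * t (N + 1) ^ (1 - θ)) ≤
      dist (x n) (x (n + 1)) + 1 / ((1 - θ) * κ * μ) * t (n + 1) ^ (1 - θ) := by
  induction N, hnN using Nat.le_induction with
  | base => rw [dist_self, zero_add]
  | succ N hnN ih =>
    have hsteps := (h N hnN N.le_succ).two_mul_length_le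
      (h (N + 1) (hnN.trans N.le_succ) le_rfl) hθ₀ hθ₁ hκ hμ (ht _) (ht _)
    have htriangle := dist_triangle (x (n + 1)) (x (N + 1)) (x (N + 1 + 1))
    linarith [ih fun k hnk hkN => h k hnk (hkN.trans N.le_succ)]

theorem dist_le_klLengthConst_mul_rpow (hθ₀ : 1 / 2 ≤ θ) (hθ₁ : θ < 1) (hκ : 0 < κ) (hμ : 0 < μ)
    (ht : ∀ k, 0 ≤ t k) (htn : t n ≤ 1) (hnN : n ≤ N)
    (h : ∀ k, n ≤ k → k < N → KLStep θ κ μ (t k) (t (k + 1)) (dist (x k) (x (k + 1)))) :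
    dist (x n) (x N) ≤ klLengthConst θ κ μ * t n ^ (1 - θ) := by
  have : 0 < 1 - θ := sub_pos.2 hθ₁
  have := ht n
  rcases hnN.eq_or_lt with rfl | hlt
  · rw [dist_self]
    exact mul_nonneg (klLengthConst_nonneg hθ₁.le hκ.le hμ.le) (Real.rpow_nonneg (ht n) _)
  obtain ⟨M, rfl⟩ := Nat.exists_eq_add_one_of_ne_zero (Nat.ne_zero_of_lt hlt)
  have hfirst : dist (x n) (x (n + 1)) ≤ 1 / √κ * t n ^ (1 - θ) :=
    calc dist (x n) (x (n + 1)) ≤ √(t n) / √κ := (h n le_rfl hlt).length_le hκ (ht _)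
      _ = 1 / √κ * √(t n) := by rw [one_div_mul_eq_div]
      _ ≤ 1 / √κ * t n ^ (1 - θ) := by
        gcongr
        simpa only [Real.sq_sqrt (ht n)] using
          le_sq_rpow_one_sub hθ₀ hθ₁.le (Real.sqrt_nonneg _) (Real.sqrt_le_one.2 htn)
  have hpotential := dist_add_potential_le_potential (by linarith) hθ₁ hκ hμ ht
    (Nat.le_of_lt_succ hlt) fun k hnk hkM => h k hnk (Nat.lt_succ_of_le hkM)
  have hlast : 0 ≤ dist (x M) (x (M + 1)) + 1 / ((1 - θ) * κ * μ) * t (M + 1) ^ (1 - θ) := by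
    have := ht (M + 1)
    positivity
  have henergy : 1 / ((1 - θ) * κ * μ) * t (n + 1) ^ (1 - θ) ≤
      1 / ((1 - θ) * κ * μ) * t n ^ (1 - θ) := by
    gcongr
    exacts [ht _, (h n le_rfl hlt).energy_le hκ.le]
  calc dist (x n) (x (M + 1)) ≤ dist (x n) (x (n + 1)) + dist (x (n + 1)) (x (M + 1)) :=
        dist_triangle _ _ _
    _ ≤ 2 * (1 / √κ * t n ^ (1 - θ)) + 1 / ((1 - θ) * κ * μ) * t n ^ (1 - θ) := by linarith
    _ = klLengthConst θ κ μ * t n ^ (1 - θ) := by rw [klLengthConst]; ring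

theorem klStep_of_infDist_lt_imp_klStep {S : Set X} {ρ : ℝ} (hθ₀ : 1 / 2 ≤ θ) (hθ₁ : θ < 1)
    (hκ : 0 < κ) (hμ : 0 < μ) (ht : ∀ k, 0 ≤ t k) (htN : t N ≤ 1)
    (hN : infDist (x N) S + klLengthConst θ κ μ * t N ^ (1 - θ) < ρ)
    (hlocal : ∀ k ≥ N, infDist (x k) S < ρ →
      KLStep θ κ μ (t k) (t (k + 1)) (dist (x k) (x (k + 1)))) :
    ∀ k ≥ N, KLStep θ κ μ (t k) (t (k + 1)) (dist (x k) (x (k + 1))) := by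
  intro k
  induction k using Nat.strong_induction_on with
  | _ k ih =>
    intro hNk
    refine hlocal k hNk ?_
    calc infDist (x k) S ≤ infDist (x N) S + dist (x k) (x N) := infDist_le_infDist_add_dist
      _ ≤ infDist (x N) S + klLengthConst θ κ μ * t N ^ (1 - θ) := by
        rw [dist_comm]
        gcongr
        exact dist_le_klLengthConst_mul_rpow hθ₀ hθ₁ hκ hμ ht htN hNk
          fun j hNj hjk => ih j hjk hNj
      _ < ρ := hN

theorem exists_tendsto_and_isBigO_rpow_of_klStep [CompleteSpace X] (hθ₀ : 1 / 2 ≤ θ) (hθ₁ : θ < 1)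
    (hκ : 0 < κ) (hμ : 0 < μ) (ht : ∀ k, 0 ≤ t k)
    (h : ∀ k ≥ N, KLStep θ κ μ (t k) (t (k + 1)) (dist (x k) (x (k + 1)))) :
    ∃ y, Tendsto x atTop (𝓝 y) ∧
      (fun k => dist (x k) y) =O[atTop] fun k => t k ^ (1 - θ) := by
  have hθ : 0 < 1 - θ := sub_pos.2 hθ₁
  have htendsto := tendsto_energy_zero (by linarith) hκ hμ ht h
  obtain ⟨M, hM⟩ := eventually_atTop.1
    ((htendsto.eventually_le_const one_pos).and (eventually_ge_atTop N))
  have htail : ∀ k j, M ≤ k → k ≤ j →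
      dist (x k) (x j) ≤ klLengthConst θ κ μ * t k ^ (1 - θ) := fun k j hk hkj =>
    dist_le_klLengthConst_mul_rpow hθ₀ hθ₁ hκ hμ ht (hM k hk).1 hkj
      fun i hki _ => h i ((hM k hk).2.trans hki)
  have hbound : Tendsto (fun k => klLengthConst θ κ μ * t k ^ (1 - θ)) atTop (𝓝 0) := by
    simpa only [Real.zero_rpow hθ.ne', mul_zero] using
      (htendsto.rpow_const (Or.inr hθ.le)).const_mul (klLengthConst θ κ μ)
  have hcauchy : CauchySeq fun k => x (k + M) :=
    cauchySeq_of_le_tendsto_0' _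
      (fun k j hkj => htail _ _ (Nat.le_add_left M k) (Nat.add_le_add_right hkj M))
      ((tendsto_add_atTop_iff_nat M).2 hbound)
  obtain ⟨y, hy⟩ := cauchySeq_tendsto_of_complete hcauchy
  replace hy : Tendsto x atTop (𝓝 y) := (tendsto_add_atTop_iff_nat M).1 hy
  refine ⟨y, hy, .of_bound (klLengthConst θ κ μ) (eventually_atTop.2 ⟨M, fun k hk => ?_⟩)⟩
  rw [Real.norm_of_nonneg dist_nonneg, Real.norm_of_nonneg (Real.rpow_nonneg (ht k) _)]
  exact le_of_tendsto (tendsto_const_nhds.dist hy)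
    (eventually_atTop.2 ⟨k, fun j => htail k j hk⟩)

end KLSequences

/-- The sufficient-decrease constant of alternating projections under the angle condition with
constant `γ` and Hölder regularity with constant `c`. The two terms cover the blocks
`b → a⁺ → b⁺` with `‖b - a⁺‖ ≤ (1 + c) * ‖a⁺ - b⁺‖`, where Hölder regularity applies, and those
where the distance shrinks by the factor `1 + c`. -/
def descentConst (γ c : ℝ) : ℝ := min (1 - √(2 * c / γ)) ((1 - 1 / (1 + c) ^ 2) / 4)

section DescentConst

variable {γ c : ℝ}

lemma one_sub_one_div_one_add_sq_pos (hc : 0 < c) : 0 < 1 - 1 / (1 + c) ^ 2 := by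
  rw [sub_pos, div_lt_one (by positivity)]
  exact one_lt_pow₀ (by linarith) two_ne_zero

lemma descentConst_pos (hc : 0 < c) (hcγ : c < γ / 2) : 0 < descentConst γ c := by
  refine lt_min ?_ (div_pos (one_sub_one_div_one_add_sq_pos hc) four_pos)
  rw [sub_pos, Real.sqrt_lt' one_pos, div_lt_iff₀ (by linarith)]
  linarith

lemma descentConst_le_one : descentConst γ c ≤ 1 :=
  (min_le_left _ _).trans (sub_le_self 1 (Real.sqrt_nonneg _))

end DescentConst

section Geometry

open InnerProductGeometry (angle)

lemma norm_sq_add_mul_norm_sub_sq_le {F : Type*} [SeminormedAddCommGroup F] {u v : F} {c : ℝ}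
    (hc : 0 < c) (h : (1 + c) * ‖v‖ ≤ ‖u‖) :
    ‖v‖ ^ 2 + (1 - 1 / (1 + c) ^ 2) / 4 * ‖u - v‖ ^ 2 ≤ ‖u‖ ^ 2 := by
  have hshrink : ‖v‖ ^ 2 ≤ 1 / (1 + c) ^ 2 * ‖u‖ ^ 2 := by
    rw [one_div, le_inv_mul_iff₀ (by positivity), ← mul_pow]
    gcongr
  have hnorm : ‖u - v‖ ≤ 2 * ‖u‖ := by
    linarith [norm_sub_le u v, mul_nonneg hc.le (norm_nonneg v)]
  have hconst := one_sub_one_div_one_add_sq_pos hc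
  calc ‖v‖ ^ 2 + (1 - 1 / (1 + c) ^ 2) / 4 * ‖u - v‖ ^ 2
      ≤ 1 / (1 + c) ^ 2 * ‖u‖ ^ 2 + (1 - 1 / (1 + c) ^ 2) / 4 * (2 * ‖u‖) ^ 2 := by gcongr
    _ = ‖u‖ ^ 2 := by ring

variable {E : Type*} [NormedAddCommGroup E] [InnerProductSpace ℝ E] {u v : E}

lemma norm_sub_sq_eq_cos_angle (u v : E) :
    ‖u - v‖ ^ 2 = ‖u‖ ^ 2 + ‖v‖ ^ 2 - 2 * (‖u‖ * ‖v‖ * Real.cos (angle u v)) := by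
  rw [norm_sub_sq_real, ← InnerProductGeometry.cos_angle_mul_norm_mul_norm]
  ring

lemma sqrt_two_mul_mul_le_norm_sub {γ p : ℝ} (hγ : 0 ≤ γ) (huv : ‖v‖ ≤ ‖u‖)
    (hcos : γ * p ^ 2 ≤ 1 - Real.cos (angle u v)) : √(2 * γ) * (‖v‖ * p) ≤ ‖u - v‖ := by
  refine le_of_sq_le_sq ?_ (norm_nonneg _)
  calc (√(2 * γ) * (‖v‖ * p)) ^ 2 = 2 * (‖v‖ * ‖v‖ * (γ * p ^ 2)) := by
        rw [mul_pow, Real.sq_sqrt (by positivity)]; ring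
    _ ≤ 2 * (‖u‖ * ‖v‖ * (1 - Real.cos (angle u v))) := by gcongr
    _ ≤ (‖u‖ - ‖v‖) ^ 2 + 2 * (‖u‖ * ‖v‖ * (1 - Real.cos (angle u v))) :=
      le_add_of_nonneg_left (sq_nonneg _)
    _ = ‖u - v‖ ^ 2 := by rw [norm_sub_sq_eq_cos_angle]; ring

lemma norm_sq_add_one_sub_mul_norm_sq_le {τ : ℝ}
    (h : 2 * ‖v‖ * Real.cos (angle u v) ≤ τ * ‖u‖) :
    ‖v‖ ^ 2 + (1 - τ) * ‖u‖ ^ 2 ≤ ‖u - v‖ ^ 2 := by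
  rw [norm_sub_sq_eq_cos_angle]
  linarith [mul_le_mul_of_nonneg_left h (norm_nonneg u)]

theorem klStep_of_cos_angle_le {θ γ c : ℝ} {a b b' : E} (hθ : θ ≠ 0) (hγ : 0 < γ) (hc : 0 < c)
    (hle : ‖a - b'‖ ≤ ‖b - a‖)
    (hangle : γ * (‖a - b'‖ ^ (2 * θ - 1)) ^ 2 ≤ 1 - Real.cos (angle (b - a) (b' - a)))
    (hregular : ‖b - a‖ ≤ (1 + c) * ‖a - b'‖ →
      Real.cos (angle (b - b') (a - b')) ≤ √c * ‖a - b'‖ ^ (2 * θ - 1)) :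
    KLStep θ (descentConst γ c) √(2 * γ) (‖b - a‖ ^ 2) (‖a - b'‖ ^ 2) ‖b - b'‖ := by
  set p := ‖a - b'‖ ^ (2 * θ - 1)
  have hlength : √(2 * γ) * (‖a - b'‖ * p) ≤ ‖b - b'‖ := by
    rw [norm_sub_rev a b'] at hle ⊢
    simpa only [sub_sub_sub_cancel_right] using sqrt_two_mul_mul_le_norm_sub hγ.le hle hangle
  refine ⟨by rwa [sq_rpow_eq_mul_rpow hθ (norm_nonneg _)], ?_⟩
  rcases le_total ‖b - a‖ ((1 + c) * ‖a - b'‖) with hnear | hshrink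
  · have hcos : 2 * ‖a - b'‖ * Real.cos (angle (b - b') (a - b')) ≤ √(2 * c / γ) * ‖b - b'‖ :=
      calc 2 * ‖a - b'‖ * Real.cos (angle (b - b') (a - b')) ≤ 2 * ‖a - b'‖ * (√c * p) := by
            gcongr
            exact hregular hnear
        _ = √(2 * c / γ) * (√(2 * γ) * (‖a - b'‖ * p)) := by
          rw [← mul_assoc √(2 * c / γ), sqrt_mul_sqrt_two_mul_eq hγ hc.le]
          ring
        _ ≤ √(2 * c / γ) * ‖b - b'‖ := by gcongr
    calc ‖a - b'‖ ^ 2 + descentConst γ c * ‖b - b'‖ ^ 2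
        ≤ ‖a - b'‖ ^ 2 + (1 - √(2 * c / γ)) * ‖b - b'‖ ^ 2 := by
          gcongr
          exact min_le_left _ _
      _ ≤ ‖b - b' - (a - b')‖ ^ 2 := norm_sq_add_one_sub_mul_norm_sq_le hcos
      _ = ‖b - a‖ ^ 2 := by rw [sub_sub_sub_cancel_right]
  · rw [norm_sub_rev a b'] at hshrink ⊢
    calc ‖b' - a‖ ^ 2 + descentConst γ c * ‖b - b'‖ ^ 2
        ≤ ‖b' - a‖ ^ 2 + (1 - 1 / (1 + c) ^ 2) / 4 * ‖b - a - (b' - a)‖ ^ 2 := by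
          rw [sub_sub_sub_cancel_right]
          gcongr
          exact min_le_right _ _
      _ ≤ ‖b - a‖ ^ 2 := norm_sq_add_mul_norm_sub_sq_le hc hshrink

end Geometry

section ConvergenceOfPairs

variable {E : Type*} [SeminormedAddCommGroup E]

theorem exists_tendsto_and_isBigO_of_klStep [CompleteSpace E] {a b : ℕ → E} {θ κ μ : ℝ} {N : ℕ}
    (hθ₀ : 1 / 2 ≤ θ) (hθ₁ : θ < 1) (hκ : 0 < κ) (hμ : 0 < μ)
    (h : ∀ k ≥ N, KLStep θ κ μ (‖a k - b k‖ ^ 2) (‖a (k + 1) - b (k + 1)‖ ^ 2)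
      (dist (b k) (b (k + 1)))) :
    ∃ y, Tendsto a atTop (𝓝 y) ∧ Tendsto b atTop (𝓝 y) ∧
      ((fun k => a k - y) =O[atTop] fun k => (‖a k - b k‖ ^ 2) ^ (1 - θ)) ∧
      (fun k => b k - y) =O[atTop] fun k => (‖a k - b k‖ ^ 2) ^ (1 - θ) := by
  have hθ : 0 < 1 - θ := sub_pos.2 hθ₁
  have henergy := tendsto_energy_zero (by linarith) hκ hμ (fun k => sq_nonneg ‖a k - b k‖) h
  obtain ⟨y, hby, hbO⟩ :=
    exists_tendsto_and_isBigO_rpow_of_klStep hθ₀ hθ₁ hκ hμ (fun k => sq_nonneg ‖a k - b k‖) h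
  simp only [dist_eq_norm, Asymptotics.isBigO_norm_left] at hbO
  have habO : (fun k => a k - b k) =O[atTop] fun k => (‖a k - b k‖ ^ 2) ^ (1 - θ) := by
    refine .of_norm_eventuallyLE ?_
    filter_upwards [henergy.eventually_le_const one_pos] with k hk
    exact le_sq_rpow_one_sub hθ₀ hθ₁.le (norm_nonneg _)
      ((pow_le_one_iff_of_nonneg (norm_nonneg _) two_ne_zero).1 hk)
  have haO : (fun k => a k - y) =O[atTop] fun k => (‖a k - b k‖ ^ 2) ^ (1 - θ) := by
    simpa only [sub_add_sub_cancel] using habO.add hbO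
  have hpow : Tendsto (fun k => (‖a k - b k‖ ^ 2) ^ (1 - θ)) atTop (𝓝 0) := by
    simpa only [Real.zero_rpow hθ.ne'] using henergy.rpow_const (Or.inr hθ.le)
  have hay : Tendsto a atTop (𝓝 y) :=
    tendsto_iff_norm_sub_tendsto_zero.2 (haO.norm_left.trans_tendsto hpow)
  exact ⟨y, hay, hby, haO, hbO⟩

lemma exists_forall_norm_le_of_isBigO {f g : ℕ → E} {φ : ℕ → ℝ} (hf : f =O[atTop] φ)
    (hg : g =O[atTop] φ) :
    ∃ C : ℝ, 0 ≤ C ∧ ∀ k, 0 < φ k → ‖f k‖ ≤ C * φ k ∧ ‖g k‖ ≤ C * φ k := by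
  obtain ⟨C, hC, hbound⟩ := Asymptotics.bound_of_isBigO_nat_atTop (hf.prod_left hg)
  refine ⟨C, hC.le, fun k hk => ?_⟩
  simpa only [Prod.norm_def, sup_le_iff, Real.norm_of_nonneg hk.le] using hbound hk.ne'

end ConvergenceOfPairs

section Projections

variable {F : Type*} [NormedAddCommGroup F] {S : Set F} {x s y : F}

lemma norm_sub_le_of_mem_projSet (hs : s ∈ projSet S x) (hy : y ∈ S) : ‖x - s‖ ≤ ‖x - y‖ := by
  rw [hs.2, ← dist_eq_norm]
  exact infDist_le_dist_of_mem hy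

lemma sub_mem_proxNormalCone_of_mem_projSet [Module ℝ F] (hs : s ∈ projSet S x) :
    x - s ∈ proxNormalCone S s :=
  ⟨1, zero_le_one, x - s, by rwa [add_sub_cancel], (one_smul ℝ _).symm⟩

end Projections

section AlternatingProjections

variable {n : ℕ} {A B Astar Bstar S : Set (EuclideanSpace ℝ (Fin n))}
  {a b : ℕ → EuclideanSpace ℝ (Fin n)}

lemma cosAngle_eq_cos_angle (u v : EuclideanSpace ℝ (Fin n)) :
    cosAngle u v = Real.cos (InnerProductGeometry.angle u v) :=
  (InnerProductGeometry.cos_angle u v).symm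

lemma IsGap.astar_eq_bstar (h : IsGap A B Astar Bstar 0) : Astar = Bstar := by
  obtain ⟨-, -, -, hA, hB⟩ := h
  apply Subset.antisymm
  · intro x hx
    obtain ⟨y, hy, -, hxy⟩ := hA x hx
    rwa [norm_sub_eq_zero_iff.1 hxy]
  · intro y hy
    obtain ⟨x, hx, -, hxy⟩ := hB y hy
    rwa [← norm_sub_eq_zero_iff.1 hxy]

lemma IsAltSeq.b_mem (h : IsAltSeq A B a b) (k : ℕ) : b k ∈ B := (h.2.1 k).1

lemma IsAltSeq.norm_sub_succ_le (h : IsAltSeq A B a b) (k : ℕ) :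
    ‖b k - a (k + 1)‖ ≤ ‖a k - b k‖ := by
  rw [norm_sub_rev (a k)]
  exact norm_sub_le_of_mem_projSet (h.2.2 k) (h.1 k)

lemma IsAltSeq.antitone_norm_sub (h : IsAltSeq A B a b) : Antitone fun k => ‖a k - b k‖ :=
  antitone_nat_of_succ_le fun k =>
    calc ‖a (k + 1) - b (k + 1)‖ ≤ ‖a (k + 1) - b k‖ :=
          norm_sub_le_of_mem_projSet (h.2.1 (k + 1)) (h.b_mem k)
      _ = ‖b k - a (k + 1)‖ := norm_sub_rev _ _
      _ ≤ ‖a k - b k‖ := h.norm_sub_succ_le k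

variable {θ γ c : ℝ}

lemma klStep_of_cosAngle_le {a b b' : EuclideanSpace ℝ (Fin n)} (hθ : θ ≠ 0) (hγ : 0 < γ)
    (hc : 0 < c) (hle : ‖a - b'‖ ≤ ‖b - a‖)
    (hangle : 0 < ‖a - b'‖ →
      γ ≤ (1 - cosAngle (b - a) (b' - a)) / ‖a - b'‖ ^ (4 * θ - 2))
    (hregular : 0 < ‖a - b'‖ → ‖b - a‖ ≤ (1 + c) * ‖a - b'‖ →
      cosAngle (b - b') (a - b') ≤ √c * ‖a - b'‖ ^ ((4 * θ - 2) / 2)) :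
    KLStep θ (descentConst γ c) √(2 * γ) (‖b - a‖ ^ 2) (‖a - b'‖ ^ 2) (dist b b') := by
  rw [dist_eq_norm]
  rcases (norm_nonneg (a - b')).eq_or_lt with hr | hr
  · obtain rfl : a = b' := norm_sub_eq_zero_iff.1 hr.symm
    simpa using KLStep.sq_zero hθ descentConst_le_one (norm_nonneg (b - a))
  have hhalf : (4 * θ - 2) / 2 = 2 * θ - 1 := by ring
  have hsq : ‖a - b'‖ ^ (4 * θ - 2) = (‖a - b'‖ ^ (2 * θ - 1)) ^ 2 := by
    rw [← Real.rpow_mul_natCast hr.le]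
    ring_nf
  simp only [cosAngle_eq_cos_angle, hhalf, hsq] at hangle hregular
  exact klStep_of_cos_angle_le hθ hγ hc hle ((le_div_iff₀ (by positivity)).1 (hangle hr))
    (hregular hr)

theorem exists_klStep_of_infDist_lt (hScomp : IsCompact S) (hSne : S.Nonempty) (hθ : θ ≠ 0)
    (hγ : 0 < γ) (hc : 0 < c) (hangle : AngleCond A B S S 0 γ (4 * θ - 2))
    (hregular : HolderRegularGap A B S 0 c ((4 * θ - 2) / 2)) :
    ∃ ρ > 0, ∀ b ∈ B, ∀ a ∈ projSet A b, ∀ b' ∈ projSet B a, infDist b S < ρ → ‖b - a‖ < ρ →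
      KLStep θ (descentConst γ c) √(2 * γ) (‖b - a‖ ^ 2) (‖a - b'‖ ^ 2) (dist b b') := by
  obtain ⟨U, V, hU, hSU, hV, hSV, hangle⟩ := hangle
  obtain ⟨W, hW, hSW, η, hη, hregular⟩ := hregular
  simp only [sub_zero, zero_add] at hangle hregular
  obtain ⟨ρ, hρ, hthick⟩ := hScomp.exists_thickening_subset_open (hU.inter (hV.inter hW))
    (subset_inter hSU (subset_inter hSV hSW))
  refine ⟨min (ρ / 3) η, by positivity, fun b hb a ha b' hb' hbS hba => ?_⟩
  obtain ⟨hbS, -⟩ := lt_min_iff.1 hbS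
  obtain ⟨hbaρ, hbaη⟩ := lt_min_iff.1 hba
  have hle : ‖a - b'‖ ≤ ‖b - a‖ := norm_sub_rev b a ▸ norm_sub_le_of_mem_projSet hb' hb
  have haS : infDist a S < ρ / 3 + ρ / 3 :=
    infDist_le_infDist_add_dist.trans_lt (add_lt_add hbS (by rwa [dist_comm, dist_eq_norm]))
  have hb'S : infDist b' S < ρ / 3 + ρ / 3 + ρ / 3 :=
    infDist_le_infDist_add_dist.trans_lt
      (add_lt_add haS (by rw [dist_comm, dist_eq_norm]; exact hle.trans_lt hbaρ))
  obtain ⟨-, haV, haW⟩ : a ∈ U ∩ (V ∩ W) :=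
    hthick ((mem_thickening_iff_infDist_lt hSne).2 (by linarith))
  obtain ⟨hb'U, -⟩ : b' ∈ U ∩ (V ∩ W) :=
    hthick ((mem_thickening_iff_infDist_lt hSne).2 (by linarith))
  refine klStep_of_cosAngle_le hθ hγ hc hle ?_ fun hr hnear => ?_
  · exact hangle b hb a ha.1 (sub_mem_proxNormalCone_of_mem_projSet ha) b' hb' haV hb'U
  · by_contra! hcos
    exact hregular b hb a ha b' hb' haW hr (hle.trans_lt hbaη) ⟨b, hb, hnear, ha, hcos⟩

lemma exists_pos_add_mul_sq_rpow_lt {K ρ : ℝ} (hθ : θ < 1) (hρ : 0 < ρ) :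
    ∃ δ > 0, δ ≤ 1 ∧ δ + K * (δ ^ 2) ^ (1 - θ) < ρ := by
  have hθ' : 0 < 1 - θ := sub_pos.2 hθ
  have hcont : Continuous fun δ : ℝ => δ + K * (δ ^ 2) ^ (1 - θ) := by
    have := (continuous_pow (M := ℝ) 2).rpow_const fun _ => Or.inr hθ'.le
    fun_prop
  have hlim : Tendsto (fun δ : ℝ => δ + K * (δ ^ 2) ^ (1 - θ)) (𝓝[>] 0) (𝓝 0) :=
    (hcont.tendsto' 0 0 (by simp [Real.zero_rpow hθ'.ne'])).mono_left nhdsWithin_le_nhds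
  obtain ⟨δ, hδρ, hδ₀, hδ₁⟩ :=
    ((hlim.eventually_lt_const hρ).and (Ioc_mem_nhdsGT zero_lt_one)).exists
  exact ⟨δ, hδ₀, hδ₁, hδρ⟩

theorem exists_klStep_of_reachesGap (hScomp : IsCompact S) (hSne : S.Nonempty)
    (hθ₀ : 1 / 2 ≤ θ) (hθ₁ : θ < 1) (hc : 0 < c) (hcγ : c < γ / 2)
    (hangle : AngleCond A B S S 0 γ (4 * θ - 2))
    (hregular : HolderRegularGap A B S 0 c ((4 * θ - 2) / 2)) :
    ∃ δ > 0, ∀ a b, IsAltSeq A B a b → ReachesGap S S 0 δ a b → ∃ N, ∀ k ≥ N,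
      KLStep θ (descentConst γ c) √(2 * γ) (‖a k - b k‖ ^ 2) (‖a (k + 1) - b (k + 1)‖ ^ 2)
        (dist (b k) (b (k + 1))) := by
  have hγ : 0 < γ := by linarith
  have hκ := descentConst_pos hc hcγ
  have hμ : 0 < √(2 * γ) := by positivity
  obtain ⟨ρ, hρ, hblock⟩ :=
    exists_klStep_of_infDist_lt hScomp hSne (by linarith) hγ hc hangle hregular
  have hK := klLengthConst_nonneg hθ₁.le hκ.le hμ.le
  obtain ⟨δ, hδ₀, hδ₁, hδρ⟩ := exists_pos_add_mul_sq_rpow_lt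
    (K := klLengthConst θ (descentConst γ c) √(2 * γ)) hθ₁ hρ
  refine ⟨δ, hδ₀, fun a b halt ⟨N, hbS, _, _, hN⟩ => ⟨N, ?_⟩⟩
  rw [zero_add] at hN
  refine klStep_of_infDist_lt_imp_klStep (S := S) (ρ := ρ) hθ₀ hθ₁ hκ hμ
    (t := fun k => ‖a k - b k‖ ^ 2) (fun k => sq_nonneg _)
    (pow_le_one₀ (norm_nonneg _) (hN.le.trans hδ₁)) ?_ fun k hNk hbk => ?_
  · calc infDist (b N) S + klLengthConst _ _ _ * (‖a N - b N‖ ^ 2) ^ (1 - θ)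
        ≤ δ + klLengthConst _ _ _ * (δ ^ 2) ^ (1 - θ) := by
          have := sub_pos.2 hθ₁
          gcongr
      _ < ρ := hδρ
  · have hgap : ‖b k - a (k + 1)‖ < ρ :=
      calc ‖b k - a (k + 1)‖ ≤ ‖a k - b k‖ := halt.norm_sub_succ_le k
        _ ≤ ‖a N - b N‖ := halt.antitone_norm_sub hNk
        _ < δ := hN
        _ ≤ δ + klLengthConst _ _ _ * (δ ^ 2) ^ (1 - θ) :=
          le_add_of_nonneg_right (mul_nonneg hK (by positivity))
        _ < ρ := hδρ
    exact (hblock (b k) (halt.b_mem k) _ (halt.2.2 k) _ (halt.2.1 (k + 1)) hbk hgap).mono_left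
      (pow_le_pow_left₀ (norm_nonneg _) (halt.norm_sub_succ_le k) 2)

end AlternatingProjections

/-- Corollary 4 (rate of convergence in the feasible case `r* = 0`).
Both sequences converge to a common point `b* ∈ A ∩ B`, with sublinear rate
`O(k^{-(1-θ)/(2θ-1)})` for `θ ∈ (1/2, 1)` and R-linearly for `θ = 1/2`. -/
theorem statement11 {n : ℕ} (A B Astar Bstar : Set (EuclideanSpace ℝ (Fin n)))
    (hAne : A.Nonempty) (hAcl : IsClosed A) (hBne : B.Nonempty) (hBcl : IsClosed B)
    (hgap : IsGap A B Astar Bstar 0)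
    (hAstar : Astar.Nonempty) (hAstarcomp : IsCompact Astar)
    (hBstar : Bstar.Nonempty) (hBstarcomp : IsCompact Bstar)
    (hsat : SaturatedGap A B Astar Bstar)
    (θ γ c ω : ℝ) (hθ1 : 1/2 ≤ θ) (hθ2 : θ < 1) (hω : ω = 4*θ - 2)
    (hγ : 0 < γ) (hc1 : 0 < c) (hc2 : c < γ/2)
    (hangle : AngleCond A B Astar Bstar 0 γ ω)
    (hholder : HolderRegularGap A B Astar 0 c (ω/2)) :
    ∃ δ > (0:ℝ), ∀ a b : ℕ → EuclideanSpace ℝ (Fin n),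
      IsAltSeq A B a b → ReachesGap Astar Bstar 0 δ a b →
      ∃ bstar : EuclideanSpace ℝ (Fin n), bstar ∈ A ∧ bstar ∈ B ∧
        Tendsto a atTop (𝓝 bstar) ∧ Tendsto b atTop (𝓝 bstar) ∧
        (1/2 < θ →
          ∃ C : ℝ, ∀ k : ℕ, 1 ≤ k →
            ‖b k - bstar‖ ≤ C * (k : ℝ) ^ (-((1 - θ)/(2*θ - 1))) ∧
            ‖a k - bstar‖ ≤ C * (k : ℝ) ^ (-((1 - θ)/(2*θ - 1)))) ∧
        (θ = 1/2 →
          ∃ C : ℝ, 0 ≤ C ∧ ∃ q : ℝ, 0 < q ∧ q < 1 ∧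
            ∀ k : ℕ, ‖b k - bstar‖ ≤ C * q ^ k ∧ ‖a k - bstar‖ ≤ C * q ^ k) := by
  obtain rfl := hgap.astar_eq_bstar
  subst hω
  have hκ := descentConst_pos hc1 hc2
  have hμ : 0 < √(2 * γ) := by positivity
  obtain ⟨δ, hδ, hsteps⟩ :=
    exists_klStep_of_reachesGap hAstarcomp hAstar hθ1 hθ2 hc1 hc2 hangle hholder
  refine ⟨δ, hδ, fun a b halt hreach => ?_⟩
  obtain ⟨N, hstep⟩ := hsteps a b halt hreach
  obtain ⟨y, hay, hby, haO, hbO⟩ := exists_tendsto_and_isBigO_of_klStep hθ1 hθ2 hκ hμ hstep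
  have hyA : y ∈ A := hAcl.mem_of_tendsto hay (.of_forall halt.1)
  have hyB : y ∈ B := hBcl.mem_of_tendsto hby (.of_forall halt.b_mem)
  refine ⟨y, hyA, hyB, hay, hby, fun hθ => ?_, fun hθ => ?_⟩
  · have hrate := isBigO_energy_rpow (t := fun k => ‖a k - b k‖ ^ 2) hθ hθ2.le hκ hμ
      (fun _ => sq_nonneg _) hstep
    obtain ⟨C, -, hC⟩ := exists_forall_norm_le_of_isBigO (hbO.trans hrate) (haO.trans hrate)
    exact ⟨C, fun k hk => hC k (by positivity)⟩
  · subst hθ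
    obtain ⟨q, hq₀, hq₁, hrate⟩ := exists_isBigO_energy_rpow_pow
      (t := fun k => ‖a k - b k‖ ^ 2) (sub_pos.2 hθ2) hκ hμ (fun _ => sq_nonneg _) hstep
    obtain ⟨C, hC₀, hC⟩ := exists_forall_norm_le_of_isBigO (hbO.trans hrate) (haO.trans hrate)
    exact ⟨C, hC₀, q, hq₀, hq₁, fun k => hC k (pow_pos hq₀ k)⟩
end
end

section
/- (Failure of the Douglas–Rachford method for cylinder and double spiral.) In ℝ³, let B = {x : x₁² + x₂² = 1, 0 ≤ x₃ ≤ 1} (the cylinder mantle), F = {(cos t, sin t, 0) : t ≥ 0}, a_±(t) = ((1 ± e^{−t})·cos t, (1 ± e^{−t})·sin t, e^{−t/2}), b(t) = (cos t, sin t, e^{−t/2}), and A = {a₊(t) : t ≥ 0} ∪ {a₋(t) : t ≥ 0} ∪ F (the double spiral). Consider the Douglas–Rachford iteration x_{n+1} ∈ ½(R_A R_B + I)(x_n), where R_S(x) = {2p − x : p ∈ P_S(x)}, started at x₁ = a₋(t₁) for some t₁ > 0. Then there is a strictly increasing sequence t₁ < t₂ < ⋯ with t_k → ∞ and t_k − t_{k−1}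 → 0 such that x_{2k−1} = a₋(t_k) and x_{2k} = b(t_k) for all k; consequently x_n − x_{n+1} → 0, the sequence (x_n) does not converge, and its set of accumulation points equals F. -/
open Set Metric Filter Topology Real

noncomputable section

/-- The (multivalued) reflection `R_S(x) = {2p - x : p ∈ P_S(x)}`. -/
def reflSet {E : Type*} [NormedAddCommGroup E] [Module ℝ E] (S : Set E) (x : E) : Set E :=
  {z | ∃ p ∈ projSet S x, z = (2:ℝ) • p - x}

/-- A point of ℝ³. -/
def pt3 (a b c : ℝ) : EuclideanSpace ℝ (Fin 3) :=
  (WithLp.equiv 2 (Fin 3 → ℝ)).symm ![a, b, c]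

/-- The cylinder mantle `B = {x : x₁² + x₂² = 1, 0 ≤ x₃ ≤ 1}`. -/
def cylinder : Set (EuclideanSpace ℝ (Fin 3)) :=
  {x | (x 0)^2 + (x 1)^2 = 1 ∧ 0 ≤ x 2 ∧ x 2 ≤ 1}

/-- The base circle `F = {(cos t, sin t, 0) : t ≥ 0}`. -/
def baseCircle : Set (EuclideanSpace ℝ (Fin 3)) :=
  {x | ∃ t : ℝ, 0 ≤ t ∧ x = pt3 (cos t) (sin t) 0}

/-- The outer spiral `a₊` (sign `+1`) and inner spiral `a₋` (sign `-1`). -/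
def spiralPt (s t : ℝ) : EuclideanSpace ℝ (Fin 3) :=
  pt3 ((1 + s * exp (-t)) * cos t) ((1 + s * exp (-t)) * sin t) (exp (-t/2))

/-- The curve `b(t)` on the cylinder mantle. -/
def mantleCurve (t : ℝ) : EuclideanSpace ℝ (Fin 3) :=
  pt3 (cos t) (sin t) (exp (-t/2))

/-- The double spiral `A = A₊ ∪ A₋ ∪ F`. -/
def doubleSpiral : Set (EuclideanSpace ℝ (Fin 3)) :=
  {x | ∃ t : ℝ, 0 ≤ t ∧ x = spiralPt 1 t} ∪
  {x | ∃ t : ℝ, 0 ≤ t ∧ x = spiralPt (-1) t} ∪ baseCircle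

/-- The set of accumulation points of a sequence. -/
def accPts (u : ℕ → EuclideanSpace ℝ (Fin 3)) : Set (EuclideanSpace ℝ (Fin 3)) :=
  {x | ∃ φ : ℕ → ℕ, StrictMono φ ∧ Tendsto (u ∘ φ) atTop (𝓝 x)}

/-!
The cylinder reflects `a₋(t)` to `a₊(t) ∈ A`, so one step leads to the midpoint `b(t)`. As
`b(t) ∈ B`, the next step is the projection of `b(t)` onto `A`. This is a point `a₋(s)` of the inner
spiral: the base circle is too far away because `e^{-2t} < e^{-t}`, and the outer spiral is further
away than the inner one unless `s - t` is a multiple of `2π`, in which case `s` is not critical.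
Moreover `t < s`: parameters below `t` are radially further away, and `t` itself is not critical,
since the radial distance `e^{-s}` decreases to first order in `s` while the angle and the height
contribute only to second order. The parameters cannot converge to a finite limit, as such a limit
would be critical for itself, and comparison with `a₋(t)` bounds the height difference by `e^{-t}`,
which is negligible against the height `e^{-t/2}`; hence `s - t → 0`. The iterates therefore shadow
the points of the base circle at angles which tend to infinity with vanishing increments.
-/

/-! ### Douglas–Rachford steps -/

section DouglasRachford

variable {E : Type*} [NormedAddCommGroup E] {A B S : Set E} {x y p q b : E}

lemma norm_sub_le_of_mem_projSet_s17 (hp : p ∈ projSet S x) (hq : q ∈ S) : ‖x - p‖ ≤ ‖x - q‖ := by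
  rw [hp.2, ← dist_eq_norm]
  exact infDist_le_dist_of_mem hq

lemma eq_of_mem_projSet_of_mem (hp : p ∈ projSet S x) (hx : x ∈ S) : p = x := by
  have h := norm_sub_le_of_mem_projSet_s17 hp hx
  rw [sub_self, norm_zero, norm_le_zero_iff, sub_eq_zero] at h
  exact h.symm

variable [Module ℝ E]

/-- The values `½(R_A R_B + I)(x)` of the Douglas–Rachford operator at `x`: the possible successors
of `x` in a Douglas–Rachford sequence for `A` and `B`. -/
def drStep (A B : Set E) (x : E) : Set E :=
  {y | ∃ w ∈ reflSet B x, ∃ z ∈ reflSet A w, y = (1 / 2 : ℝ) • (x + z)}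

lemma exists_of_mem_drStep (hy : y ∈ drStep A B x) :
    ∃ p ∈ projSet B x, ∃ q ∈ projSet A ((2 : ℝ) • p - x), y = x - p + q := by
  obtain ⟨_, ⟨p, hp, rfl⟩, _, ⟨q, hq, rfl⟩, rfl⟩ := hy
  exact ⟨p, hp, q, hq, by module⟩

lemma eq_of_mem_drStep_of_reflection_mem (hb : ∀ p ∈ projSet B x, p = b)
    (hA : (2 : ℝ) • b - x ∈ A) (hy : y ∈ drStep A B x) : y = b := by
  obtain ⟨p, hp, q, hq, rfl⟩ := exists_of_mem_drStep hy
  obtain rfl := hb p hp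
  rw [eq_of_mem_projSet_of_mem hq hA]
  module

lemma mem_projSet_of_mem_drStep_of_mem (hx : x ∈ B) (hy : y ∈ drStep A B x) : y ∈ projSet A x := by
  obtain ⟨p, hp, q, hq, rfl⟩ := exists_of_mem_drStep hy
  obtain rfl := eq_of_mem_projSet_of_mem hp hx
  rw [show (2 : ℝ) • p - p = p by module] at hq
  rwa [sub_self, zero_add]

end DouglasRachford

/-! ### Sequences and accumulation points -/

section Sequences

lemma exists_le_lt_succ_of_tendsto_atTop {α : Type*} [LinearOrder α] [NoMaxOrder α] {t : ℕ → α}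
    (ht : Tendsto t atTop atTop) {N : ℕ} {y : α} (hN : t N ≤ y) :
    ∃ n ≥ N, t n ≤ y ∧ y < t (n + 1) := by
  by_contra! hstay
  have hbounded : ∀ n ≥ N, t n ≤ y := fun n hn ↦ Nat.le_induction hN hstay n hn
  obtain ⟨n, hny, hNn⟩ := ((ht.eventually_gt_atTop y).and (eventually_ge_atTop N)).exists
  exact (hbounded n hNn).not_gt hny

lemma exists_strictMono_succ_eq {α : Type*} [Preorder α] [NoMinOrder α] {t : ℕ → α}
    (ht : StrictMono t) : ∃ t' : ℕ → α, StrictMono t' ∧ ∀ k, t' (k + 1) = t k := by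
  obtain ⟨a, ha⟩ := exists_lt (t 0)
  refine ⟨fun k ↦ Nat.casesOn k a t, strictMono_nat_of_lt_succ fun k ↦ ?_, fun _ ↦ rfl⟩
  cases k with
  | zero => exact ha
  | succ k => exact ht k.lt_succ_self

lemma isMinOn_of_tendsto {ι X Y : Type*} [TopologicalSpace X] [TopologicalSpace Y] {l : Filter ι}
    [l.NeBot] {F : X → Y → ℝ} (hF : Continuous fun z : X × Y ↦ F z.1 z.2) {S : Set Y}
    {u : ι → X} {v : ι → Y} {a : X} {b : Y} (hu : Tendsto u l (𝓝 a)) (hv : Tendsto v l (𝓝 b))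
    (hmin : ∀ i, IsMinOn (F (u i)) S (v i)) : IsMinOn (F a) S b := fun y hy ↦
  le_of_tendsto_of_tendsto' ((hF.tendsto (a, b)).comp (hu.prodMk_nhds hv))
    ((hF.tendsto (a, y)).comp (hu.prodMk_nhds tendsto_const_nhds)) fun i ↦ hmin i hy

lemma mapClusterPt_comp_of_periodic {X : Type*} [TopologicalSpace X] {f : ℝ → X} {c : ℝ}
    (hf : Function.Periodic f c) (hc : 0 < c) {t : ℕ → ℝ} (ht : Tendsto t atTop atTop)
    (hgap : Tendsto (fun n ↦ t (n + 1) - t n) atTop (𝓝 0)) {θ : ℝ} (hθ : ContinuousAt f θ) :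
    MapClusterPt (f θ) atTop (f ∘ t) := by
  refine mapClusterPt_iff_frequently.mpr fun s hs ↦ frequently_atTop.mpr fun N ↦ ?_
  obtain ⟨δ, hδ, hball⟩ := Metric.mem_nhds_iff.mp (hθ hs)
  obtain ⟨K, hK⟩ := eventually_atTop.mp
    ((hgap.eventually_lt_const hδ).and (eventually_ge_atTop N))
  obtain ⟨j, hj⟩ := Archimedean.arch (t K - θ) hc
  obtain ⟨n, hKn, hle, hlt⟩ :=
    exists_le_lt_succ_of_tendsto_atTop ht (N := K) (y := θ + j • c) (by linarith)
  have hclose : t n - j • c ∈ ball θ δ := by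
    rw [Metric.mem_ball, Real.dist_eq, abs_lt]
    constructor <;> linarith [(hK n hKn).1]
  refine ⟨n, (hK n hKn).2, ?_⟩
  simpa only [mem_preimage, Function.comp_apply, hf.sub_nsmul_eq] using hball hclose

lemma tendsto_succ_half_atTop : Tendsto (fun n : ℕ ↦ (n + 1) / 2) atTop atTop :=
  (Nat.tendsto_div_const_atTop two_ne_zero).comp (tendsto_add_atTop_nat 1)

lemma tendsto_succ_sub_comp_half {t : ℕ → ℝ}
    (hgap : Tendsto (fun k ↦ t (k + 1) - t k) atTop (𝓝 0)) :
    Tendsto (fun n : ℕ ↦ t ((n + 1 + 1) / 2) - t ((n + 1) / 2)) atTop (𝓝 0) := by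
  refine squeeze_zero_norm (fun n ↦ ?_)
    (tendsto_zero_iff_norm_tendsto_zero.mp (hgap.comp tendsto_succ_half_atTop))
  obtain h | h : (n + 1 + 1) / 2 = (n + 1) / 2 ∨ (n + 1 + 1) / 2 = (n + 1) / 2 + 1 := by omega
  · simp [h]
  · simp [h]

lemma tendsto_sub_succ_of_tendsto_sub_comp {E : Type*} [NormedAddCommGroup E] {u : ℕ → E}
    {f : ℝ → E} (hf : UniformContinuous f) {t : ℕ → ℝ}
    (hgap : Tendsto (fun n ↦ t (n + 1) - t n) atTop (𝓝 0))
    (hu : Tendsto (u - f ∘ t) atTop (𝓝 0)) : Tendsto (fun n ↦ u n - u (n + 1)) atTop (𝓝 0) := by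
  have hclose : Tendsto (fun n ↦ (t (n + 1), t n)) atTop (uniformity ℝ) :=
    tendsto_uniformity_iff_dist_tendsto_zero.mpr (tendsto_zero_iff_norm_tendsto_zero.mp hgap)
  have hf_gap : Tendsto (fun n ↦ ‖f (t (n + 1)) - f (t n)‖) atTop (𝓝 0) := by
    simpa only [Function.comp_apply, dist_eq_norm] using
      tendsto_uniformity_iff_dist_tendsto_zero.mp (Tendsto.comp hf hclose)
  have hsum := (hu.sub (hu.comp (tendsto_add_atTop_nat 1))).sub
    (tendsto_zero_iff_norm_tendsto_zero.mpr hf_gap)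
  rw [sub_zero, sub_zero] at hsum
  refine hsum.congr fun n ↦ ?_
  simp only [Pi.sub_apply, Function.comp_apply]
  abel

variable {u v : ℕ → EuclideanSpace ℝ (Fin 3)} {p l : EuclideanSpace ℝ (Fin 3)}

lemma eq_of_mem_accPts_of_tendsto (hp : p ∈ accPts u) (hl : Tendsto u atTop (𝓝 l)) : p = l := by
  obtain ⟨φ, hφ, hlim⟩ := hp
  exact tendsto_nhds_unique hlim (hl.comp hφ.tendsto_atTop)

lemma accPts_subset_of_tendsto_sub (h : Tendsto (u - v) atTop (𝓝 0)) : accPts u ⊆ accPts v := by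
  rintro p ⟨φ, hφ, hlim⟩
  refine ⟨φ, hφ, ?_⟩
  simpa [Function.comp_def] using hlim.sub (h.comp hφ.tendsto_atTop)

lemma accPts_eq_of_tendsto_sub (h : Tendsto (u - v) atTop (𝓝 0)) : accPts u = accPts v :=
  (accPts_subset_of_tendsto_sub h).antisymm
    (accPts_subset_of_tendsto_sub (by simpa [Pi.sub_def] using h.neg))

lemma accPts_comp_of_periodic {f : ℝ → EuclideanSpace ℝ (Fin 3)} {c : ℝ}
    (hf : Function.Periodic f c) (hc : 0 < c) (hcont : Continuous f) {t : ℕ → ℝ}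
    (ht : Tendsto t atTop atTop) (hgap : Tendsto (fun n ↦ t (n + 1) - t n) atTop (𝓝 0)) :
    accPts (f ∘ t) = range f := by
  refine Subset.antisymm ?_ ?_
  · rintro p ⟨φ, -, hlim⟩
    have hclosed : IsClosed (range f) := (hf.compact_of_continuous hc.ne' hcont).isClosed
    exact hclosed.mem_of_tendsto hlim (Eventually.of_forall fun n ↦ mem_range_self _)
  · rintro _ ⟨θ, rfl⟩
    exact (mapClusterPt_comp_of_periodic hf hc ht hgap hcont.continuousAt).tendsto_subseq

end Sequences

/-! ### Points of the cylinder, the base circle and the spirals -/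

section Geometry

@[simp] lemma pt3_apply_zero (a b c : ℝ) : pt3 a b c 0 = a := rfl

@[simp] lemma pt3_apply_one (a b c : ℝ) : pt3 a b c 1 = b := rfl

@[simp] lemma pt3_apply_two (a b c : ℝ) : pt3 a b c 2 = c := rfl

lemma norm_sq_eq_three (x : EuclideanSpace ℝ (Fin 3)) :
    ‖x‖ ^ 2 = x 0 ^ 2 + x 1 ^ 2 + x 2 ^ 2 := by
  simp [EuclideanSpace.norm_sq_eq, Fin.sum_univ_three]

lemma exp_neg_half_sq (t : ℝ) : exp (-t / 2) ^ 2 = exp (-t) := by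
  rw [← exp_nat_mul]
  ring_nf

lemma norm_sq_pt3_sub_of_mem_cylinder (r θ h : ℝ) {p : EuclideanSpace ℝ (Fin 3)}
    (hp : p ∈ cylinder) :
    ‖pt3 (r * cos θ) (r * sin θ) h - p‖ ^ 2 =
      (1 - r) ^ 2 + r * ((p 0 - cos θ) ^ 2 + (p 1 - sin θ) ^ 2) + (p 2 - h) ^ 2 := by
  simp only [norm_sq_eq_three, PiLp.sub_apply, pt3_apply_zero, pt3_apply_one, pt3_apply_two]
  linear_combination (1 - r) * hp.1 + (r ^ 2 - r) * cos_sq_add_sin_sq θ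

lemma eq_of_mem_projSet_cylinder {r θ h : ℝ} (hr : 0 < r) (h₀ : 0 ≤ h) (h₁ : h ≤ 1)
    {p : EuclideanSpace ℝ (Fin 3)}
    (hp : p ∈ projSet cylinder (pt3 (r * cos θ) (r * sin θ) h)) :
    p = pt3 (cos θ) (sin θ) h := by
  have hfoot : pt3 (cos θ) (sin θ) h ∈ cylinder := ⟨cos_sq_add_sin_sq θ, h₀, h₁⟩
  have hle := pow_le_pow_left₀ (norm_nonneg _) (norm_sub_le_of_mem_projSet_s17 hp hfoot) 2
  rw [norm_sq_pt3_sub_of_mem_cylinder r θ h hp.1,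
    norm_sq_pt3_sub_of_mem_cylinder r θ h hfoot] at hle
  simp only [pt3_apply_zero, pt3_apply_one, pt3_apply_two, sub_self] at hle
  have hcos : r * (p 0 - cos θ) ^ 2 = 0 := by
    nlinarith [sq_nonneg (p 0 - cos θ), sq_nonneg (p 1 - sin θ), sq_nonneg (p 2 - h)]
  have hsin : r * (p 1 - sin θ) ^ 2 = 0 := by
    nlinarith [sq_nonneg (p 0 - cos θ), sq_nonneg (p 1 - sin θ), sq_nonneg (p 2 - h)]
  have hheight : (p 2 - h) ^ 2 = 0 := by nlinarith [sq_nonneg (p 2 - h)]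
  ext i
  fin_cases i
  · simpa [hr.ne', sub_eq_zero] using hcos
  · simpa [hr.ne', sub_eq_zero] using hsin
  · simpa [sub_eq_zero] using hheight

lemma mantleCurve_mem_cylinder {t : ℝ} (ht : 0 ≤ t) : mantleCurve t ∈ cylinder :=
  ⟨cos_sq_add_sin_sq t, (exp_pos _).le, exp_le_one_iff.mpr (by linarith)⟩

lemma spiralPt_zero (t : ℝ) : spiralPt 0 t = mantleCurve t := by
  simp [spiralPt, mantleCurve]

lemma spiralPt_injective (σ : ℝ) : Function.Injective (spiralPt σ) := fun s t h ↦ by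
  have hheight : exp (-s / 2) = exp (-t / 2) := congrArg (fun p ↦ p 2) h
  linarith [exp_injective hheight]

lemma two_smul_mantleCurve_sub_spiralPt (σ t : ℝ) :
    (2 : ℝ) • mantleCurve t - spiralPt σ t = spiralPt (-σ) t := by
  ext i
  fin_cases i <;> simp [mantleCurve, spiralPt] <;> ring

lemma eq_mantleCurve_of_mem_projSet_cylinder {t : ℝ} (ht : 0 < t)
    {p : EuclideanSpace ℝ (Fin 3)} (hp : p ∈ projSet cylinder (spiralPt (-1) t)) :
    p = mantleCurve t :=
  have hexp : exp (-t) < 1 := Real.exp_lt_one_iff.mpr (neg_lt_zero.mpr ht)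
  eq_of_mem_projSet_cylinder (by linarith) (exp_pos _).le (exp_le_one_iff.mpr (by linarith)) hp

/-- The point of the base circle at angle `t`, which the iterates shadow. -/
def baseCirclePt (t : ℝ) : EuclideanSpace ℝ (Fin 3) :=
  pt3 (cos t) (sin t) 0

lemma baseCirclePt_periodic : Function.Periodic baseCirclePt (2 * π) := fun t ↦ by
  simp [baseCirclePt]

lemma range_baseCirclePt : range baseCirclePt = baseCircle := by
  refine Subset.antisymm ?_ ?_
  · rw [← baseCirclePt_periodic.image_Icc two_pi_pos 0]
    rintro _ ⟨t, ht, rfl⟩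
    exact ⟨t, ht.1, rfl⟩
  · rintro _ ⟨t, -, rfl⟩
    exact mem_range_self t

lemma baseCircle_nontrivial : baseCircle.Nontrivial := by
  refine ⟨pt3 (cos 0) (sin 0) 0, ⟨0, le_rfl, rfl⟩, pt3 (cos π) (sin π) 0, ⟨π, pi_pos.le, rfl⟩, ?_⟩
  intro h
  have hcos : cos 0 = cos π := congrArg (fun p ↦ p 0) h
  norm_num at hcos

lemma lipschitzWith_baseCirclePt : LipschitzWith 1 baseCirclePt := by
  refine LipschitzWith.of_dist_le_mul fun s t ↦ ?_
  rw [NNReal.coe_one, one_mul, dist_eq_norm, Real.dist_eq]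
  refine abs_le_of_sq_le_sq' ?_ (abs_nonneg _) |>.2
  calc ‖baseCirclePt s - baseCirclePt t‖ ^ 2 = 2 * (1 - cos (s - t)) := by
        simp only [norm_sq_eq_three, baseCirclePt, PiLp.sub_apply, pt3_apply_zero, pt3_apply_one,
          pt3_apply_two, cos_sub]
        linear_combination cos_sq_add_sin_sq s + cos_sq_add_sin_sq t
    _ ≤ |s - t| ^ 2 := by
        rw [sq_abs]
        linarith [one_sub_sq_div_two_le_cos (x := s - t)]

lemma tendsto_spiralPt_sub_baseCirclePt (σ : ℝ) :
    Tendsto (fun t ↦ spiralPt σ t - baseCirclePt t) atTop (𝓝 0) := by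
  have hnorm : ∀ t, ‖spiralPt σ t - baseCirclePt t‖ = √((σ * exp (-t)) ^ 2 + exp (-t)) := fun t ↦ by
    rw [← sqrt_sq (norm_nonneg _), norm_sq_eq_three]
    simp only [spiralPt, baseCirclePt, PiLp.sub_apply, pt3_apply_zero, pt3_apply_one,
      pt3_apply_two]
    congr 1
    linear_combination (σ * exp (-t)) ^ 2 * cos_sq_add_sin_sq t + exp_neg_half_sq t
  rw [tendsto_zero_iff_norm_tendsto_zero]
  simp only [hnorm]
  simpa using
    (((tendsto_exp_neg_atTop_nhds_zero.const_mul σ).pow 2).add tendsto_exp_neg_atTop_nhds_zero).sqrt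

lemma exp_neg_le_norm_sq_mantleCurve_sub (t : ℝ) {q : EuclideanSpace ℝ (Fin 3)}
    (hq : q ∈ baseCircle) : exp (-t) ≤ ‖mantleCurve t - q‖ ^ 2 := by
  obtain ⟨s, -, rfl⟩ := hq
  rw [norm_sq_eq_three, ← exp_neg_half_sq t]
  simp only [mantleCurve, PiLp.sub_apply, pt3_apply_zero, pt3_apply_one, pt3_apply_two, sub_zero]
  linarith [sq_nonneg (cos t - cos s), sq_nonneg (sin t - sin s)]

end Geometry

/-! ### Distance from the mantle curve to the spirals -/

section SpiralDistance

/-- The squared distance from `b(t)` to the point with parameter `s` of the spiral of sign `σ`,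
to be minimised in `s` in order to project `b(t)` onto that spiral. -/
def spiralDistSq (σ t s : ℝ) : ℝ :=
  ‖mantleCurve t - spiralPt σ s‖ ^ 2

variable {σ s t : ℝ}

lemma spiralDistSq_eq (σ t s : ℝ) :
    spiralDistSq σ t s = (σ * exp (-s)) ^ 2 + 2 * (1 + σ * exp (-s)) * (1 - cos (s - t)) +
      (exp (-t / 2) - exp (-s / 2)) ^ 2 := by
  simp only [spiralDistSq, norm_sq_eq_three, mantleCurve, spiralPt, PiLp.sub_apply, pt3_apply_zero,
    pt3_apply_one, pt3_apply_two, cos_sub]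
  linear_combination cos_sq_add_sin_sq t + (1 + σ * exp (-s)) ^ 2 * cos_sq_add_sin_sq s

lemma spiralDistSq_self (σ t : ℝ) : spiralDistSq σ t t = (σ * exp (-t)) ^ 2 := by
  simp [spiralDistSq_eq]

lemma continuous_spiralDistSq (σ : ℝ) :
    Continuous fun z : ℝ × ℝ ↦ spiralDistSq σ z.1 z.2 := by
  simp only [spiralDistSq_eq]
  fun_prop

lemma spiralDistSq_one_sub_neg_one (t s : ℝ) :
    spiralDistSq 1 t s - spiralDistSq (-1) t s = 4 * exp (-s) * (1 - cos (s - t)) := by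
  simp only [spiralDistSq_eq]
  ring

lemma radial_sq_add_height_sq_le_spiralDistSq (hσ : -1 ≤ σ) (hs : 0 ≤ s) (t : ℝ) :
    (σ * exp (-s)) ^ 2 + (exp (-t / 2) - exp (-s / 2)) ^ 2 ≤ spiralDistSq σ t s := by
  have hexp : exp (-s) ≤ 1 := exp_le_one_iff.mpr (by linarith)
  have hradius : 0 ≤ 1 + σ * exp (-s) := by nlinarith [exp_pos (-s)]
  rw [spiralDistSq_eq]
  linarith [mul_nonneg hradius (sub_nonneg.mpr (cos_le_one (s - t)))]

lemma le_of_spiralDistSq_le_self (hσ : -1 ≤ σ) (hσ₀ : σ ≠ 0) (hs : 0 ≤ s)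
    (h : spiralDistSq σ t s ≤ spiralDistSq σ t t) : t ≤ s := by
  have hradial : σ ^ 2 * exp (-s) ^ 2 ≤ σ ^ 2 * exp (-t) ^ 2 := by
    rw [spiralDistSq_self] at h
    rw [← mul_pow, ← mul_pow]
    linarith [radial_sq_add_height_sq_le_spiralDistSq hσ hs t,
      sq_nonneg (exp (-t / 2) - exp (-s / 2))]
  have hexp : exp (-s) ≤ exp (-t) :=
    (sq_le_sq₀ (exp_pos _).le (exp_pos _).le).mp (le_of_mul_le_mul_left hradial (by positivity))
  linarith [exp_le_exp.mp hexp]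

lemma one_sub_exp_le_exp_of_spiralDistSq_le_self (hσ : -1 ≤ σ) (hs : 0 ≤ s)
    (h : spiralDistSq σ t s ≤ spiralDistSq σ t t) :
    1 - |σ| * exp (-t / 2) ≤ exp ((t - s) / 2) := by
  have hheight : (exp (-t / 2) - exp (-s / 2)) ^ 2 ≤ (σ * exp (-t)) ^ 2 := by
    rw [spiralDistSq_self] at h
    linarith [radial_sq_add_height_sq_le_spiralDistSq hσ hs t, sq_nonneg (σ * exp (-s))]
  have hdiff : exp (-t / 2) - exp (-s / 2) ≤ |σ| * exp (-t) := by
    simpa [abs_mul] using (le_abs_self _).trans (sq_le_sq.mp hheight)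
  have hs_eq : exp (-s / 2) = exp (-t / 2) * exp ((t - s) / 2) := by
    rw [← exp_add]
    ring_nf
  refine le_of_mul_le_mul_left ?_ (exp_pos (-t / 2))
  rw [hs_eq, ← exp_neg_half_sq] at hdiff
  linarith

lemma hasDerivAt_spiralDistSq (σ t s : ℝ) :
    HasDerivAt (spiralDistSq σ t)
      (-2 * (σ * exp (-s)) ^ 2 - 2 * (σ * exp (-s)) * (1 - cos (s - t)) +
        2 * (1 + σ * exp (-s)) * sin (s - t) + (exp (-t / 2) - exp (-s / 2)) * exp (-s / 2)) s := by
  have hradius : HasDerivAt (fun s ↦ σ * exp (-s)) (σ * (exp (-s) * -1)) s :=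
    (hasDerivAt_id s).neg.exp.const_mul σ
  have hangle : HasDerivAt (fun s ↦ 1 - cos (s - t)) (-(-sin (s - t) * 1)) s :=
    ((hasDerivAt_id s).sub_const t).cos.const_sub 1
  have hheight : HasDerivAt (fun s ↦ exp (-t / 2) - exp (-s / 2)) (-(exp (-s / 2) * (-1 / 2))) s :=
    ((hasDerivAt_id s).neg.div_const 2).exp.const_sub _
  have hsum := ((hradius.pow 2).add (((hradius.const_add 1).const_mul 2).mul hangle)).add
    (hheight.pow 2)
  rw [funext (spiralDistSq_eq σ t)]
  refine hsum.congr_deriv ?_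
  ring

lemma exp_half_sub_eq_of_isLocalMin (hcos : cos (s - t) = 1)
    (hmin : IsLocalMin (spiralDistSq σ t) s) : exp ((s - t) / 2) = 1 + 2 * σ ^ 2 * exp (-s) := by
  have hsin : sin (s - t) = 0 := by
    simpa [hcos] using sin_sq_add_cos_sq (s - t)
  have hcrit := hmin.hasDerivAt_eq_zero (hasDerivAt_spiralDistSq σ t s)
  have ht_eq : exp (-t / 2) = exp (-s / 2) * exp ((s - t) / 2) := by
    rw [← exp_add]
    ring_nf
  rw [hcos, hsin, ht_eq] at hcrit
  refine mul_left_cancel₀ (exp_ne_zero (-s)) ?_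
  linear_combination hcrit + (1 - exp ((s - t) / 2)) * exp_neg_half_sq s

lemma cos_sub_ne_one_of_isLocalMin (hσ : |σ| ≤ 1) (hσ₀ : σ ≠ 0) (hs : 0 ≤ s) (hts : t ≤ s)
    (hmin : IsLocalMin (spiralDistSq σ t) s) : cos (s - t) ≠ 1 := by
  intro hcos
  have hcrit := exp_half_sub_eq_of_isLocalMin hcos hmin
  rcases hts.eq_or_lt with rfl | hlt
  · simp [hσ₀] at hcrit
  · obtain ⟨n, hn⟩ := (cos_eq_one_iff _).mp hcos
    have hn_pos : (0 : ℝ) < n := by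
      refine pos_of_mul_pos_left (b := 2 * π) ?_ two_pi_pos.le
      linarith
    have hn_one : (1 : ℝ) ≤ n := by exact_mod_cast hn_pos
    have hturn : 2 * π ≤ s - t := by nlinarith [two_pi_pos]
    have hlower : 4 < exp ((s - t) / 2) := by
      linarith [add_one_le_exp ((s - t) / 2), pi_gt_three]
    have hupper : σ ^ 2 * exp (-s) ≤ 1 :=
      mul_le_one₀ (sq_le_one_iff_abs_le_one σ |>.mpr hσ) (exp_pos _).le
        (exp_le_one_iff.mpr (by linarith))
    linarith

lemma cos_sub_ne_one_of_isMinOn (hσ : |σ| ≤ 1) (hσ₀ : σ ≠ 0) (ht : 0 < t) (hs : 0 ≤ s)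
    (hmin : IsMinOn (spiralDistSq σ t) (Ici 0) s) : cos (s - t) ≠ 1 := by
  have hle : t ≤ s := le_of_spiralDistSq_le_self (neg_le_of_abs_le hσ) hσ₀ hs (hmin ht.le)
  exact cos_sub_ne_one_of_isLocalMin hσ hσ₀ hs hle
    (hmin.isLocalMin (Ici_mem_nhds (ht.trans_le hle)))

lemma lt_of_isMinOn_spiralDistSq (hσ : |σ| ≤ 1) (hσ₀ : σ ≠ 0) (ht : 0 < t) (hs : 0 ≤ s)
    (hmin : IsMinOn (spiralDistSq σ t) (Ici 0) s) : t < s := by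
  refine (le_of_spiralDistSq_le_self (neg_le_of_abs_le hσ) hσ₀ hs (hmin ht.le)).lt_of_ne ?_
  rintro rfl
  exact cos_sub_ne_one_of_isMinOn hσ hσ₀ ht hs hmin (by simp)

lemma exists_of_mem_projSet_doubleSpiral (ht : 0 < t) {q : EuclideanSpace ℝ (Fin 3)}
    (hq : q ∈ projSet doubleSpiral (mantleCurve t)) :
    ∃ s, 0 ≤ s ∧ IsMinOn (spiralDistSq (-1) t) (Ici 0) s ∧ q = spiralPt (-1) s := by
  have hnear : ∀ s, 0 ≤ s → ‖mantleCurve t - q‖ ^ 2 ≤ spiralDistSq (-1) t s := fun s hs ↦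
    pow_le_pow_left₀ (norm_nonneg _)
      (norm_sub_le_of_mem_projSet_s17 hq (.inl (.inr ⟨s, hs, rfl⟩))) 2
  rcases hq.1 with (⟨s, hs, rfl⟩ | ⟨s, hs, rfl⟩) | hcircle
  · have hdiff := spiralDistSq_one_sub_neg_one t s
    have hnear_outer : ∀ s', 0 ≤ s' → spiralDistSq 1 t s ≤ spiralDistSq (-1) t s' := hnear
    have hinner : spiralDistSq (-1) t s ≤ spiralDistSq 1 t s := by
      rw [← sub_nonneg, hdiff]
      exact mul_nonneg (by positivity) (sub_nonneg.mpr (cos_le_one _))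
    have hmin : IsMinOn (spiralDistSq (-1) t) (Ici 0) s := fun s' hs' ↦
      hinner.trans (hnear_outer s' hs')
    have hcos := cos_sub_ne_one_of_isMinOn (by simp) (by simp) ht hs hmin
    have hgap : 0 < 4 * exp (-s) * (1 - cos (s - t)) :=
      mul_pos (by positivity) (sub_pos.mpr ((cos_le_one _).lt_of_ne hcos))
    linarith [hnear_outer s hs]
  · exact ⟨s, hs, fun s' hs' ↦ hnear s' hs', rfl⟩
  · have hclose := hnear t ht.le
    rw [spiralDistSq_self] at hclose
    nlinarith [exp_neg_le_norm_sq_mantleCurve_sub t hcircle, exp_pos (-t),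
      Real.exp_lt_one_iff.mpr (neg_lt_zero.mpr ht)]

end SpiralDistance

/-! ### The parameters of the iterates -/

/-- Positive parameters such that `a₋(t (k + 1))` is a nearest point to `b(t k)` on the inner
spiral, for every `k`. These are the parameters of the Douglas–Rachford iterates, numbered
from `0`. -/
structure IsNearestParamSeq (t : ℕ → ℝ) : Prop where
  pos : ∀ k, 0 < t k
  isMinOn : ∀ k, IsMinOn (spiralDistSq (-1) (t k)) (Ici 0) (t (k + 1))

namespace IsNearestParamSeq

variable {t : ℕ → ℝ}

lemma strictMono (ht : IsNearestParamSeq t) : StrictMono t :=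
  strictMono_nat_of_lt_succ fun k ↦ lt_of_isMinOn_spiralDistSq (by simp) (by simp)
    (ht.pos k) (ht.pos (k + 1)).le (ht.isMinOn k)

lemma tendsto_atTop (ht : IsNearestParamSeq t) : Tendsto t atTop atTop := by
  rcases tendsto_atTop_of_monotone ht.strictMono.monotone with hlim | ⟨l, hl⟩
  · exact hlim
  · have hl_pos : 0 < l := (ht.pos 0).trans_le (ht.strictMono.monotone.ge_of_tendsto hl 0)
    have hmin : IsMinOn (spiralDistSq (-1) l) (Ici 0) l :=
      isMinOn_of_tendsto (continuous_spiralDistSq (-1)) hl (hl.comp (tendsto_add_atTop_nat 1))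
        ht.isMinOn
    exact absurd (lt_of_isMinOn_spiralDistSq (by simp) (by simp) hl_pos hl_pos.le hmin)
      (lt_irrefl l)

lemma tendsto_succ_sub (ht : IsNearestParamSeq t) :
    Tendsto (fun k ↦ t (k + 1) - t k) atTop (𝓝 0) := by
  have hlower : Tendsto (fun k ↦ 1 - |(-1 : ℝ)| * exp (-t k / 2)) atTop (𝓝 1) := by
    have hexp : Tendsto (fun k ↦ exp (-t k / 2)) atTop (𝓝 0) := tendsto_exp_atBot.comp
      ((tendsto_neg_atTop_atBot.comp ht.tendsto_atTop).atBot_div_const two_pos)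
    simpa using (hexp.const_mul |(-1 : ℝ)|).const_sub 1
  have hexp_gap : Tendsto (fun k ↦ exp ((t k - t (k + 1)) / 2)) atTop (𝓝 1) := by
    refine tendsto_of_tendsto_of_tendsto_of_le_of_le hlower tendsto_const_nhds (fun k ↦ ?_)
      fun k ↦ exp_le_one_iff.mpr (by linarith [ht.strictMono k.lt_succ_self])
    exact one_sub_exp_le_exp_of_spiralDistSq_le_self le_rfl (ht.pos (k + 1)).le
      (ht.isMinOn k (ht.pos k).le)
  have hlog := (hexp_gap.log one_ne_zero).const_mul (-2)
  simp only [log_exp, log_one, mul_zero] at hlog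
  refine hlog.congr fun k ↦ ?_
  ring

end IsNearestParamSeq

section Iterates

variable {x : ℕ → EuclideanSpace ℝ (Fin 3)} {t : ℕ → ℝ}

lemma eq_mantleCurve_of_mem_drStep {t : ℝ} (ht : 0 < t) {y : EuclideanSpace ℝ (Fin 3)}
    (hy : y ∈ drStep doubleSpiral cylinder (spiralPt (-1) t)) : y = mantleCurve t := by
  refine eq_of_mem_drStep_of_reflection_mem
    (fun p ↦ eq_mantleCurve_of_mem_projSet_cylinder ht) (.inl (.inl ⟨t, ht.le, ?_⟩)) hy
  rw [two_smul_mantleCurve_sub_spiralPt, neg_neg]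

lemma exists_spiralPt_of_mem_drStep {t : ℝ} (ht : 0 < t) {y : EuclideanSpace ℝ (Fin 3)}
    (hy : y ∈ drStep doubleSpiral cylinder (mantleCurve t)) :
    ∃ s, 0 < s ∧ IsMinOn (spiralDistSq (-1) t) (Ici 0) s ∧ y = spiralPt (-1) s := by
  obtain ⟨s, hs, hmin, rfl⟩ := exists_of_mem_projSet_doubleSpiral ht
    (mem_projSet_of_mem_drStep_of_mem (mantleCurve_mem_cylinder ht.le) hy)
  have hts : t < s := lt_of_isMinOn_spiralDistSq (by simp) (by simp) ht hs hmin
  exact ⟨s, ht.trans hts, hmin, rfl⟩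

lemma exists_isNearestParamSeq {t₁ : ℝ} (ht₁ : 0 < t₁) (hstart : x 1 = spiralPt (-1) t₁)
    (hstep : ∀ n, 1 ≤ n → x (n + 1) ∈ drStep doubleSpiral cylinder (x n)) :
    ∃ t, IsNearestParamSeq t ∧ t 0 = t₁ ∧
      ∀ k, x (2 * k + 1) = spiralPt (-1) (t k) ∧ x (2 * k + 2) = mantleCurve (t k) := by
  have hmantle : ∀ k t, 0 < t → x (2 * k + 1) = spiralPt (-1) t →
      x (2 * k + 2) = mantleCurve t := fun k t ht hx ↦
    eq_mantleCurve_of_mem_drStep ht (hx ▸ hstep (2 * k + 1) (by omega))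
  have hnext : ∀ k t, 0 < t → x (2 * k + 1) = spiralPt (-1) t → ∃ s, 0 < s ∧
      IsMinOn (spiralDistSq (-1) t) (Ici 0) s ∧ x (2 * (k + 1) + 1) = spiralPt (-1) s :=
    fun k t ht hx ↦ exists_spiralPt_of_mem_drStep ht
      (hmantle k t ht hx ▸ hstep (2 * k + 2) (by omega))
  have hparam : ∀ k, ∃ t, 0 < t ∧ x (2 * k + 1) = spiralPt (-1) t := fun k ↦ by
    induction k with
    | zero => exact ⟨t₁, ht₁, hstart⟩
    | succ k ih =>
      obtain ⟨t, ht, hx⟩ := ih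
      obtain ⟨s, hs, -, hxs⟩ := hnext k t ht hx
      exact ⟨s, hs, hxs⟩
  choose t hpos hspiral using hparam
  refine ⟨t, ⟨hpos, fun k ↦ ?_⟩, spiralPt_injective (-1) ((hspiral 0).symm.trans hstart),
    fun k ↦ ⟨hspiral k, hmantle k _ (hpos k) (hspiral k)⟩⟩
  obtain ⟨s, -, hmin, hxs⟩ := hnext k _ (hpos k) (hspiral k)
  rwa [spiralPt_injective (-1) ((hspiral (k + 1)).symm.trans hxs)]

lemma exists_spiral_params {t₁ : ℝ} (ht₁ : 0 < t₁) (hstart : x 1 = spiralPt (-1) t₁)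
    (hstep : ∀ n, 1 ≤ n → x (n + 1) ∈ drStep doubleSpiral cylinder (x n)) :
    ∃ t : ℕ → ℝ, StrictMono t ∧ t 1 = t₁ ∧ Tendsto t atTop atTop ∧
      Tendsto (fun k ↦ t (k + 1) - t k) atTop (𝓝 0) ∧
      ∀ k, 1 ≤ k → x (2 * k - 1) = spiralPt (-1) (t k) ∧ x (2 * k) = mantleCurve (t k) := by
  obtain ⟨s, hs, hs₀, hx⟩ := exists_isNearestParamSeq ht₁ hstart hstep
  obtain ⟨t, ht, hts⟩ := exists_strictMono_succ_eq hs.strictMono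
  refine ⟨t, ht, (hts 0).trans hs₀, ?_, ?_, fun k hk ↦ ?_⟩
  · rw [← tendsto_add_atTop_iff_nat 1]
    simpa only [hts] using hs.tendsto_atTop
  · rw [← tendsto_add_atTop_iff_nat 1]
    simpa only [hts] using hs.tendsto_succ_sub
  · obtain ⟨k, rfl⟩ := Nat.exists_eq_add_of_le' hk
    rw [hts]
    exact hx k

lemma tendsto_sub_baseCirclePt (ht : Tendsto t atTop atTop)
    (hx : ∀ k, 1 ≤ k → x (2 * k - 1) = spiralPt (-1) (t k) ∧ x (2 * k) = mantleCurve (t k)) :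
    Tendsto (x - fun n ↦ baseCirclePt (t ((n + 1) / 2))) atTop (𝓝 0) := by
  have hspiral : ∀ σ : ℝ, Tendsto (fun n : ℕ ↦ ‖spiralPt σ (t ((n + 1) / 2)) -
      baseCirclePt (t ((n + 1) / 2))‖) atTop (𝓝 0) := fun σ ↦
    tendsto_zero_iff_norm_tendsto_zero.mp
      ((tendsto_spiralPt_sub_baseCirclePt σ).comp (ht.comp tendsto_succ_half_atTop))
  refine squeeze_zero_norm' ?_ (by simpa using (hspiral (-1)).max (hspiral 0))
  filter_upwards [eventually_ge_atTop 1] with n hn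
  obtain ⟨hodd, heven⟩ := hx ((n + 1) / 2) (by omega)
  obtain h | h : n = 2 * ((n + 1) / 2) - 1 ∨ n = 2 * ((n + 1) / 2) := by omega
  · rw [← h] at hodd
    simp [hodd]
  · rw [← h, ← spiralPt_zero] at heven
    simp [heven]

lemma accPts_eq_baseCircle_of_tendsto_sub (ht : Tendsto t atTop atTop)
    (hgap : Tendsto (fun n ↦ t (n + 1) - t n) atTop (𝓝 0))
    (hx : Tendsto (x - baseCirclePt ∘ t) atTop (𝓝 0)) : accPts x = baseCircle := by
  rw [accPts_eq_of_tendsto_sub hx, accPts_comp_of_periodic baseCirclePt_periodic two_pi_pos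
    lipschitzWith_baseCirclePt.continuous ht hgap, range_baseCirclePt]

lemma not_tendsto_of_accPts_eq_baseCircle (hx : accPts x = baseCircle) :
    ¬ ∃ l, Tendsto x atTop (𝓝 l) := by
  rintro ⟨l, hl⟩
  obtain ⟨p, hp, q, hq, hpq⟩ := hx ▸ baseCircle_nontrivial
  exact hpq ((eq_of_mem_accPts_of_tendsto hp hl).trans (eq_of_mem_accPts_of_tendsto hq hl).symm)

end Iterates

/-- failure of the Douglas–Rachford method for the cylinder mantle and the
double spiral: the DR iterates started at `a₋(t₁)` follow `x_{2k-1} = a₋(t_k)`,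
`x_{2k} = b(t_k)` for a strictly increasing sequence `t_k → ∞` with `t_k - t_{k-1} → 0`;
consequently `x_n - x_{n+1} → 0`, the sequence does not converge, and its accumulation
points fill the base circle. -/
theorem statement17 (x : ℕ → EuclideanSpace ℝ (Fin 3)) (t₁ : ℝ) (ht₁ : 0 < t₁)
    (hstart : x 1 = spiralPt (-1) t₁)
    (hstep : ∀ n, 1 ≤ n → ∃ w ∈ reflSet cylinder (x n), ∃ z ∈ reflSet doubleSpiral w,
      x (n+1) = (1/2 : ℝ) • (x n + z)) :
    (∃ t : ℕ → ℝ, StrictMono t ∧ t 1 = t₁ ∧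
      Tendsto t atTop atTop ∧
      Tendsto (fun k => t (k+1) - t k) atTop (𝓝 0) ∧
      ∀ k, 1 ≤ k → x (2*k - 1) = spiralPt (-1) (t k) ∧ x (2*k) = mantleCurve (t k)) ∧
    Tendsto (fun n => x n - x (n+1)) atTop (𝓝 0) ∧
    (¬ ∃ l, Tendsto x atTop (𝓝 l)) ∧
    accPts x = baseCircle := by
  obtain ⟨t, hmono, hone, hlim, hgap, hx⟩ := exists_spiral_params ht₁ hstart hstep
  have hgap_half := tendsto_succ_sub_comp_half hgap
  have hshadow := tendsto_sub_baseCirclePt hlim hx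
  have hregular : Tendsto (fun n ↦ x n - x (n + 1)) atTop (𝓝 0) :=
    tendsto_sub_succ_of_tendsto_sub_comp lipschitzWith_baseCirclePt.uniformContinuous hgap_half
      hshadow
  have hacc : accPts x = baseCircle :=
    accPts_eq_baseCircle_of_tendsto_sub (hlim.comp tendsto_succ_half_atTop) hgap_half hshadow
  exact ⟨⟨t, hmono, hone, hlim, hgap, hx⟩, hregular, not_tendsto_of_accPts_eq_baseCircle hacc, hacc⟩
end
end
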